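/- Let p be an odd prime and s a positive integer with p^s ≡ 2 (mod 3), and let m = (2p^s - 1)/3 or m = p^s - 1. Then, modulo p^{s+5}, sum_{k=0}^{m} (6k+1) (1/3)_k^6 / (k!)^6 ≡ 10 p^s * ((2/3)_{(2p^s-1)/3}^3 / (1)_{(2p^s-1)/3}^3). -/

import Mathlib

open Finset

/-- Rising factorial `(x)_k = x(x+1)⋯(x+k-1)`. -/
def poch (x : ℚ) (k : ℕ) : ℚ := ∏ i ∈ Finset.range k, (x + i)

/-- `a ≡ b (mod p^m)`: the `p`-adic valuation of `a - b` is at least `m`. -/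
def pcong (p : ℕ) (m : ℕ) (a b : ℚ) : Prop :=
  a = b ∨ (m : ℤ) ≤ padicValRat p (a - b)

/-- Generalized harmonic number `H_m^{(ℓ)} = ∑_{k=1}^m 1/k^ℓ`. -/
def harm (m ℓ : ℕ) : ℚ := ∑ k ∈ Finset.Icc 1 m, 1 / (k : ℚ) ^ ℓ

set_option linter.all false
theorem poch_zero (x : ℚ) : poch x 0 = 1 := by simp [poch]
theorem poch_succ (x : ℚ) (k : ℕ) : poch x (k+1) = poch x k * (x + k) := by
  simp [poch, Finset.prod_range_succ]
theorem poch_succ' (x : ℚ) (k : ℕ) : poch x (k+1) = x * poch (x+1) k := by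
  simp only [poch, Finset.prod_range_succ']
  rw [mul_comm]; congr 1
  · simp
  · apply Finset.prod_congr rfl; intro i _; push_cast; ring
theorem poch_ne (x : ℚ) (k : ℕ) (h : ∀ i < k, x + (i:ℚ) ≠ 0) : poch x k ≠ 0 := by
  unfold poch; rw [Finset.prod_ne_zero_iff]; intro i hi; exact h i (Finset.mem_range.1 hi)

/-- Dougall term. -/
def dT (a b c d : ℚ) (m k : ℕ) : ℚ :=
  (a + 2*k) * (poch a k * poch b k * poch c k * poch d k * poch (1+2*a-b-c-d+m) k * poch (-(m:ℚ)) k) /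
   (k.factorial * poch (1+a-b) k * poch (1+a-c) k * poch (1+a-d) k * poch (b+c+d-a-m) k * poch (1+a+m) k)

def dR (a b c d : ℚ) (m : ℕ) : ℚ :=
  (1+a+m)*(1+a-b-c+m)*(1+a-b-d+m)*(1+a-c-d+m)/
   ((1+a-b+m)*(1+a-c+m)*(1+a-d+m)*(1+a-b-c-d+m))

def dG (a b c d : ℚ) (m K : ℕ) : ℚ :=
  - (2*a+2*m+2-b-c-d)*(1+a+m)/((1+a-b+m)*(1+a-c+m)*(1+a-d+m)*(1+a-b-c-d+m)) *
  (poch a (K+1) * poch b (K+1) * poch c (K+1) * poch d (K+1) * poch (2+2*a-b-c-d+m) K * poch (-(m:ℚ)) K) /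
   (K.factorial * poch (1+a-b) K * poch (1+a-c) K * poch (1+a-d) K * poch (b+c+d-a-m) K * poch (1+a+m) (K+1))

set_option maxRecDepth 4000 in
theorem alg0 (a b c d m : ℚ) (hB : 1+a-b+m ≠ 0) (hC : 1+a-c+m ≠ 0) (hD : 1+a-d+m ≠ 0)
   (hE : 1+a-b-c-d+m ≠ 0) (hA : 1+a+m ≠ 0) :
   a - (1+a+m)*(1+a-b-c+m)*(1+a-b-d+m)*(1+a-c-d+m)/
   ((1+a-b+m)*(1+a-c+m)*(1+a-d+m)*(1+a-b-c-d+m)) * a =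
   - (2*a+2*m+2-b-c-d)*(1+a+m)/((1+a-b+m)*(1+a-c+m)*(1+a-d+m)*(1+a-b-c-d+m)) *
   (a * b * c * d) / (1+a+m) := by
  field_simp
  ring

theorem algS (a b c d m K : ℚ) :
   (a+2*K)*(1+2*a-b-c-d+m+K)*(m+1)*(b+c+d-a-m-1+K)*((1+a-b+m)*(1+a-c+m)*(1+a-d+m))
   - (1+a-b-c+m)*(1+a-b-d+m)*(1+a-c-d+m)*(a+2*K)*(-m+K-1)*(1+2*a-b-c-d+m)*(1+a+m+K)
   = -(2*a+2*m+2-b-c-d)*((a+K)*(b+K)*(c+K)*(d+K)*(1+2*a-b-c-d+m+K)*(-m+K-1)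
     - K*(a-b+K)*(a-c+K)*(a-d+K)*(b+c+d-a-m-1+K)*(1+a+m+K)) := by
  ring

theorem at1 (s N A5 A6 f g F K1 A7 A8 A9 A10 A11 B1 B2 B3 B4 B5 B6 B7 B8 B9 B10 : ℚ)
  (h1 : F ≠ 0) (h2 : K1 ≠ 0) (h3 : A7 ≠ 0) (h4 : A8 ≠ 0) (h5 : A9 ≠ 0) (h6 : A10 ≠ 0) (h7 : A11 ≠ 0)
  (g1 : B1 ≠ 0) (g2 : B2 ≠ 0) (g3 : B3 ≠ 0) (g4 : B4 ≠ 0) (g5 : B5 ≠ 0) (g6 : B6 ≠ 0) (g7 : B7 ≠ 0) (g8 : B8 ≠ 0)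
  (g9 : B9 ≠ 0) (g10 : B10 ≠ 0) :
  s * (N * (A5 * f) * (-g * A6)) / (K1 * F * (A7*B1) * (A8*B2) * (A9*B3) * (-B8 * A10) * (A11 * B9 / B10))
  = (N * A5 * A6 / (F * A7 * A8 * A9 * A10 * A11) * B10 / (K1 * B1*B2*B3*B4*(B5*B6*B7*B8)*B9)) * (s * f * g * B4 * (B5*B6*B7)) := by
  simp only [div_eq_mul_inv, mul_inv, inv_inv, inv_neg]
  have cB4 : B4 * B4⁻¹ = 1 := mul_inv_cancel₀ g4
  have cB5 : B5 * B5⁻¹ = 1 := mul_inv_cancel₀ g5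
  have cB6 : B6 * B6⁻¹ = 1 := mul_inv_cancel₀ g6
  have cB7 : B7 * B7⁻¹ = 1 := mul_inv_cancel₀ g7
  calc _ = (N * A5 * A6 * F⁻¹ * A7⁻¹ * A8⁻¹ * A9⁻¹ * A10⁻¹ * A11⁻¹ * B10 * K1⁻¹ * B1⁻¹ * B2⁻¹ * B3⁻¹ * B8⁻¹ * B9⁻¹ * s * f * g) := by ring
    _ = (N * A5 * A6 * F⁻¹ * A7⁻¹ * A8⁻¹ * A9⁻¹ * A10⁻¹ * A11⁻¹ * B10 * K1⁻¹ * B1⁻¹ * B2⁻¹ * B3⁻¹ * B8⁻¹ * B9⁻¹ * s * f * g) * ((B4 * B4⁻¹) * (B5 * B5⁻¹) * (B6 * B6⁻¹) * (B7 * B7⁻¹)) := by rw [cB4, cB5, cB6, cB7]; simp only [mul_one]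
    _ = _ := by ring

theorem at2 (s N A5 A6 X Y Z f g F K1 A7 A8 A9 A10 A11 B1 B2 B3 B4 B5 B6 B7 B8 B9 B10 : ℚ)
  (h1 : F ≠ 0) (h2 : K1 ≠ 0) (h3 : A7 ≠ 0) (h4 : A8 ≠ 0) (h5 : A9 ≠ 0) (h6 : A10 ≠ 0) (h7 : A11 ≠ 0)
  (g1 : B1 ≠ 0) (g2 : B2 ≠ 0) (g3 : B3 ≠ 0) (g4 : B4 ≠ 0) (g5 : B5 ≠ 0) (g6 : B6 ≠ 0) (g7 : B7 ≠ 0) (g8 : B8 ≠ 0)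
  (g9 : B9 ≠ 0) (g10 : B10 ≠ 0) :
  B10 * X * Y * Z / (B5*B6*B7*B8) * (s * (N * (f * A5) * (A6 * g)) / (K1 * F * (A7*B1) * (A8*B2) * (A9*B3) * (A10 * B4) * A11))
  = (N * A5 * A6 / (F * A7 * A8 * A9 * A10 * A11) * B10 / (K1 * B1*B2*B3*B4*(B5*B6*B7*B8)*B9)) * (X * Y * Z * s * g * f * B9) := by
  simp only [div_eq_mul_inv, mul_inv, inv_inv, inv_neg]
  have cB9 : B9 * B9⁻¹ = 1 := mul_inv_cancel₀ g9
  calc _ = (N * A5 * A6 * F⁻¹ * A7⁻¹ * A8⁻¹ * A9⁻¹ * A10⁻¹ * A11⁻¹ * B10 * K1⁻¹ * B1⁻¹ * B2⁻¹ * B3⁻¹ * B4⁻¹ * B5⁻¹ * B6⁻¹ * B7⁻¹ * B8⁻¹ * X * Y * Z * s * f * g) := by ring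
    _ = (N * A5 * A6 * F⁻¹ * A7⁻¹ * A8⁻¹ * A9⁻¹ * A10⁻¹ * A11⁻¹ * B10 * K1⁻¹ * B1⁻¹ * B2⁻¹ * B3⁻¹ * B4⁻¹ * B5⁻¹ * B6⁻¹ * B7⁻¹ * B8⁻¹ * X * Y * Z * s * f * g) * ((B9 * B9⁻¹)) := by rw [cB9]; simp only [mul_one]
    _ = _ := by ring

theorem at3 (k A1 A2 A3 A4 A5 A6 x y z u f g F K1 A7 A8 A9 A10 A11 B1 B2 B3 B4 B5 B6 B7 B8 B9 B10 : ℚ)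
  (h1 : F ≠ 0) (h2 : K1 ≠ 0) (h3 : A7 ≠ 0) (h4 : A8 ≠ 0) (h5 : A9 ≠ 0) (h6 : A10 ≠ 0) (h7 : A11 ≠ 0)
  (g1 : B1 ≠ 0) (g2 : B2 ≠ 0) (g3 : B3 ≠ 0) (g4 : B4 ≠ 0) (g5 : B5 ≠ 0) (g6 : B6 ≠ 0) (g7 : B7 ≠ 0) (g8 : B8 ≠ 0)
  (g9 : B9 ≠ 0) (g10 : B10 ≠ 0) :
  -k * B10 / (B5*B6*B7*B8) * (A1 * x * (A2 * y) * (A3 * z) * (A4 * u) * (A5 * f) * (A6 * g)) / (K1 * F * (A7*B1) * (A8*B2) * (A9*B3) * (A10 * B4) * (A11 * B9))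
  = (A1*A2*A3*A4 * A5 * A6 / (F * A7 * A8 * A9 * A10 * A11) * B10 / (K1 * B1*B2*B3*B4*(B5*B6*B7*B8)*B9)) * (-k * (x * y * z * u * f * g)) := by
  simp only [div_eq_mul_inv, mul_inv, inv_inv, inv_neg]
  ring

theorem at4 (k N A5 A6 F K1 A7 A8 A9 A10 A11 B1 B2 B3 B4 B5 B6 B7 B8 B9 B10 : ℚ)
  (h1 : F ≠ 0) (h2 : K1 ≠ 0) (h3 : A7 ≠ 0) (h4 : A8 ≠ 0) (h5 : A9 ≠ 0) (h6 : A10 ≠ 0) (h7 : A11 ≠ 0)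
  (g1 : B1 ≠ 0) (g2 : B2 ≠ 0) (g3 : B3 ≠ 0) (g4 : B4 ≠ 0) (g5 : B5 ≠ 0) (g6 : B6 ≠ 0) (g7 : B7 ≠ 0) (g8 : B8 ≠ 0)
  (g9 : B9 ≠ 0) (g10 : B10 ≠ 0) :
  -k * B10 / (B5*B6*B7*B8) * (N * A5 * A6) / (F * A7 * A8 * A9 * A10 * A11)
  = (N * A5 * A6 / (F * A7 * A8 * A9 * A10 * A11) * B10 / (K1 * B1*B2*B3*B4*(B5*B6*B7*B8)*B9)) * (-k * (K1 * B1 * B2 * B3 * B4 * B9)) := by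
  simp only [div_eq_mul_inv, mul_inv, inv_inv, inv_neg]
  have cK1 : K1 * K1⁻¹ = 1 := mul_inv_cancel₀ h2
  have cB1 : B1 * B1⁻¹ = 1 := mul_inv_cancel₀ g1
  have cB2 : B2 * B2⁻¹ = 1 := mul_inv_cancel₀ g2
  have cB3 : B3 * B3⁻¹ = 1 := mul_inv_cancel₀ g3
  have cB4 : B4 * B4⁻¹ = 1 := mul_inv_cancel₀ g4
  have cB9 : B9 * B9⁻¹ = 1 := mul_inv_cancel₀ g9
  calc _ = (-k * N * A5 * A6 * F⁻¹ * A7⁻¹ * A8⁻¹ * A9⁻¹ * A10⁻¹ * A11⁻¹ * B10 * B5⁻¹ * B6⁻¹ * B7⁻¹ * B8⁻¹) := by ring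
    _ = (-k * N * A5 * A6 * F⁻¹ * A7⁻¹ * A8⁻¹ * A9⁻¹ * A10⁻¹ * A11⁻¹ * B10 * B5⁻¹ * B6⁻¹ * B7⁻¹ * B8⁻¹) * ((K1 * K1⁻¹) * (B1 * B1⁻¹) * (B2 * B2⁻¹) * (B3 * B3⁻¹) * (B4 * B4⁻¹) * (B9 * B9⁻¹)) := by rw [cK1, cB1, cB2, cB3, cB4, cB9]; simp only [mul_one]
    _ = _ := by ring

set_option maxHeartbeats 1000000 in
theorem dstep (a b c d : ℚ) (m K : ℕ)
   (hB : ∀ i < m+1, 1+a-b+(i:ℚ) ≠ 0) (hC : ∀ i < m+1, 1+a-c+(i:ℚ) ≠ 0) (hD : ∀ i < m+1, 1+a-d+(i:ℚ) ≠ 0)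
   (hE : ∀ i ≤ m+1, b+c+d-a-(i:ℚ) ≠ 0) (hA : ∀ i < 2*(m+1), 1+a+(i:ℚ) ≠ 0) (hK : K ≤ m) :
   dT a b c d (m+1) (K+1) - dR a b c d m * dT a b c d m (K+1) = dG a b c d m (K+1) - dG a b c d m K := by
  have hpB : poch (1+a-b) K ≠ 0 := poch_ne _ _ fun i hi => hB i (by omega)
  have hpC : poch (1+a-c) K ≠ 0 := poch_ne _ _ fun i hi => hC i (by omega)
  have hpD : poch (1+a-d) K ≠ 0 := poch_ne _ _ fun i hi => hD i (by omega)
  have hpY : poch (b+c+d-a-m) K ≠ 0 := poch_ne _ _ fun i hi => by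
    have := hE (m-i) (by omega)
    rw [Nat.cast_sub (by omega)] at this
    intro h; apply this; linear_combination h
  have hY : (b+c+d-a-m) + (K:ℚ) ≠ 0 := by
    have := hE (m-K) (by omega)
    rw [Nat.cast_sub (by omega)] at this
    intro h; apply this; linear_combination h
  have hpA : poch (1+a+m) (K+1) ≠ 0 := poch_ne _ _ fun i hi => by
    have := hA (m+i) (by omega)
    push_cast at this
    intro h; apply this; linear_combination h
  have hA2 : 1+a+m+((K:ℚ)+1) ≠ 0 := by
    have := hA (m+K+1) (by omega)
    push_cast at this
    intro h; apply this; linear_combination h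
  have hA0 : 1+a+(m:ℚ) ≠ 0 := hA m (by omega)
  have hB0 := hB m (by omega)
  have hC0 := hC m (by omega)
  have hD0 := hD m (by omega)
  have hBK := hB K (by omega)
  have hCK := hC K (by omega)
  have hDK := hD K (by omega)
  have hE0 : 1+a-b-c-d+(m:ℚ) ≠ 0 := by
    have := hE (m+1) (by omega)
    push_cast at this
    intro h; apply this; linear_combination -h
  have hE1 : b+c+d-a-(m:ℚ)-1 ≠ 0 := by
    intro h; apply hE0; linear_combination -h
  have hf : (K.factorial : ℚ) ≠ 0 := by exact_mod_cast K.factorial_ne_zero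
  have hK1 : (K:ℚ)+1 ≠ 0 := by positivity
  have e1 : poch (1+2*a-b-c-d+((m+1:ℕ):ℚ)) (K+1) = poch (2+2*a-b-c-d+m) K * (1+2*a-b-c-d+m+((K:ℚ)+1)) := by
    rw [show 1+2*a-b-c-d+((m+1:ℕ):ℚ) = 2+2*a-b-c-d+m by push_cast; ring, poch_succ]; congr 1; ring
  have e2 : poch (1+2*a-b-c-d+(m:ℚ)) (K+1) = (1+2*a-b-c-d+m) * poch (2+2*a-b-c-d+m) K := by
    rw [poch_succ']; congr 2; ring
  have e3 : poch (-((m+1:ℕ):ℚ)) (K+1) = -(m+1) * poch (-(m:ℚ)) K := by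
    rw [poch_succ']; congr 1
    · push_cast; ring
    · congr 1; push_cast; ring
  have e4 : poch (b+c+d-a-((m+1:ℕ):ℚ)) (K+1) = (b+c+d-a-m-1) * poch (b+c+d-a-m) K := by
    rw [poch_succ']; congr 1
    · push_cast; ring
    · congr 1; push_cast; ring
  have e5 : poch (1+a+((m+1:ℕ):ℚ)) (K+1) = poch (1+a+m) (K+1) * (1+a+m+((K:ℚ)+1)) / (1+a+m) := by
    rw [eq_div_iff hA0]
    have := poch_succ' (1+a+m) (K+1)
    rw [poch_succ (1+a+m) (K+1)] at this
    push_cast at this ⊢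
    rw [show 1+a+((m:ℚ)+1) = 1+a+m+1 by ring]
    linear_combination -this
  have hS := algS a b c d m ((K:ℚ)+1)
  have t1 : dT a b c d (m+1) (K+1) = (poch a (K+1) * poch b (K+1) * poch c (K+1) * poch d (K+1) * poch (2+2*a-b-c-d+m) K * poch (-(m:ℚ)) K
     / (K.factorial * poch (1+a-b) K * poch (1+a-c) K * poch (1+a-d) K * poch (b+c+d-a-m) K * poch (1+a+m) (K+1))
     * (1+a+m) / (((K:ℚ)+1)*(1+a-b+K)*(1+a-c+K)*(1+a-d+K)*((b+c+d-a-m)+K)*((1+a-b+m)*(1+a-c+m)*(1+a-d+m)*(1+a-b-c-d+m))*(1+a+m+((K:ℚ)+1)))) *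
     ((a+2*((K:ℚ)+1))*(1+2*a-b-c-d+m+((K:ℚ)+1))*(m+1)*(b+c+d-a-m-1+((K:ℚ)+1))*((1+a-b+m)*(1+a-c+m)*(1+a-d+m))) := by
    unfold dT
    rw [e1, e3, e4, e5, poch_succ (1+a-b), poch_succ (1+a-c), poch_succ (1+a-d), Nat.factorial_succ]
    push_cast
    rw [show (b+c+d-a-(m:ℚ)-1) = -(1+a-b-c-d+m) by ring,
      show -(1+a-b-c-d+m)+((K:ℚ)+1) = (b+c+d-a-m)+K by ring]
    exact at1 _ _ _ _ _ _ _ _ _ _ _ _ _ _ _ _ _ _ _ _ _ _ _ hf hK1 hpB hpC hpD hpY hpA hBK hCK hDK hY hB0 hC0 hD0 hE0 hA2 hA0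
  have t2 : dR a b c d m * dT a b c d m (K+1) = (poch a (K+1) * poch b (K+1) * poch c (K+1) * poch d (K+1) * poch (2+2*a-b-c-d+m) K * poch (-(m:ℚ)) K
     / (K.factorial * poch (1+a-b) K * poch (1+a-c) K * poch (1+a-d) K * poch (b+c+d-a-m) K * poch (1+a+m) (K+1))
     * (1+a+m) / (((K:ℚ)+1)*(1+a-b+K)*(1+a-c+K)*(1+a-d+K)*((b+c+d-a-m)+K)*((1+a-b+m)*(1+a-c+m)*(1+a-d+m)*(1+a-b-c-d+m))*(1+a+m+((K:ℚ)+1)))) *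
     ((1+a-b-c+m)*(1+a-b-d+m)*(1+a-c-d+m)*(a+2*((K:ℚ)+1))*(-m+((K:ℚ)+1)-1)*(1+2*a-b-c-d+m)*(1+a+m+((K:ℚ)+1))) := by
    unfold dT dR
    rw [e2, poch_succ (1+a-b), poch_succ (1+a-c), poch_succ (1+a-d), poch_succ (b+c+d-a-m), poch_succ (-(m:ℚ)), Nat.factorial_succ]
    push_cast
    rw [show -(m:ℚ)+((K:ℚ)+1)-1 = -m+K by ring]
    exact at2 _ _ _ _ _ _ _ _ _ _ _ _ _ _ _ _ _ _ _ _ _ _ _ _ _ _ hf hK1 hpB hpC hpD hpY hpA hBK hCK hDK hY hB0 hC0 hD0 hE0 hA2 hA0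
  have t3 : dG a b c d m (K+1) = (poch a (K+1) * poch b (K+1) * poch c (K+1) * poch d (K+1) * poch (2+2*a-b-c-d+m) K * poch (-(m:ℚ)) K
     / (K.factorial * poch (1+a-b) K * poch (1+a-c) K * poch (1+a-d) K * poch (b+c+d-a-m) K * poch (1+a+m) (K+1))
     * (1+a+m) / (((K:ℚ)+1)*(1+a-b+K)*(1+a-c+K)*(1+a-d+K)*((b+c+d-a-m)+K)*((1+a-b+m)*(1+a-c+m)*(1+a-d+m)*(1+a-b-c-d+m))*(1+a+m+((K:ℚ)+1)))) *
     (-(2*a+2*m+2-b-c-d)*((a+((K:ℚ)+1))*(b+((K:ℚ)+1))*(c+((K:ℚ)+1))*(d+((K:ℚ)+1))*(1+2*a-b-c-d+m+((K:ℚ)+1))*(-m+((K:ℚ)+1)-1))) := by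
    unfold dG
    rw [poch_succ a (K+1), poch_succ b (K+1), poch_succ c (K+1), poch_succ d (K+1), poch_succ (2+2*a-b-c-d+m), poch_succ (1+a-b), poch_succ (1+a-c), poch_succ (1+a-d), poch_succ (b+c+d-a-m), poch_succ (-(m:ℚ)), poch_succ (1+a+m) (K+1), Nat.factorial_succ]
    push_cast
    rw [show -(m:ℚ)+((K:ℚ)+1)-1 = -m+K by ring, show 2+2*a-b-c-d+m+K = 1+2*a-b-c-d+m+((K:ℚ)+1) by ring]
    exact at3 _ _ _ _ _ _ _ _ _ _ _ _ _ _ _ _ _ _ _ _ _ _ _ _ _ _ _ _ _ _ hf hK1 hpB hpC hpD hpY hpA hBK hCK hDK hY hB0 hC0 hD0 hE0 hA2 hA0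
  have t4 : dG a b c d m K = (poch a (K+1) * poch b (K+1) * poch c (K+1) * poch d (K+1) * poch (2+2*a-b-c-d+m) K * poch (-(m:ℚ)) K
     / (K.factorial * poch (1+a-b) K * poch (1+a-c) K * poch (1+a-d) K * poch (b+c+d-a-m) K * poch (1+a+m) (K+1))
     * (1+a+m) / (((K:ℚ)+1)*(1+a-b+K)*(1+a-c+K)*(1+a-d+K)*((b+c+d-a-m)+K)*((1+a-b+m)*(1+a-c+m)*(1+a-d+m)*(1+a-b-c-d+m))*(1+a+m+((K:ℚ)+1)))) *
     (-(2*a+2*m+2-b-c-d)*(((K:ℚ)+1)*(a-b+((K:ℚ)+1))*(a-c+((K:ℚ)+1))*(a-d+((K:ℚ)+1))*(b+c+d-a-m-1+((K:ℚ)+1))*(1+a+m+((K:ℚ)+1)))) := by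
    unfold dG
    rw [show a-b+((K:ℚ)+1) = 1+a-b+K by ring, show a-c+((K:ℚ)+1) = 1+a-c+K by ring, show a-d+((K:ℚ)+1) = 1+a-d+K by ring, show b+c+d-a-m-1+((K:ℚ)+1) = (b+c+d-a-m)+K by ring]
    exact at4 _ _ _ _ _ _ _ _ _ _ _ _ _ _ _ _ _ _ _ _ _ hf hK1 hpB hpC hpD hpY hpA hBK hCK hDK hY hB0 hC0 hD0 hE0 hA2 hA0
  rw [t1, t2, t3, t4, ← mul_sub, ← mul_sub, hS, mul_sub]

theorem poch_neg_zero (m K : ℕ) (h : m < K) : poch (-(m:ℚ)) K = 0 := by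
  unfold poch
  exact Finset.prod_eq_zero (Finset.mem_range.2 h) (by simp)

theorem dsum (a b c d : ℚ) (m K : ℕ)
   (hB : ∀ i < m+1, 1+a-b+(i:ℚ) ≠ 0) (hC : ∀ i < m+1, 1+a-c+(i:ℚ) ≠ 0) (hD : ∀ i < m+1, 1+a-d+(i:ℚ) ≠ 0)
   (hE : ∀ i ≤ m+1, b+c+d-a-(i:ℚ) ≠ 0) (hA : ∀ i < 2*(m+1), 1+a+(i:ℚ) ≠ 0) (hK : K ≤ m+1) :
   ∑ k ∈ Finset.range (K+1), (dT a b c d (m+1) k - dR a b c d m * dT a b c d m k) = dG a b c d m K := by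
  induction K with
  | zero =>
    have hE0 : 1+a-b-c-d+(m:ℚ) ≠ 0 := by
      have := hE (m+1) (by omega)
      push_cast at this
      intro h; apply this; linear_combination -h
    have := alg0 a b c d m (hB m (by omega)) (hC m (by omega)) (hD m (by omega)) hE0 (hA m (by omega))
    simp only [dT, dR, dG, zero_add, Finset.sum_range_one, poch_succ, poch_zero]
    simp
    simpa using this
  | succ K ih =>
    rw [Finset.sum_range_succ, ih (by omega), dstep a b c d m K hB hC hD hE hA (by omega)]
    ring

theorem dougall (a b c d : ℚ) (m : ℕ)
   (hB : ∀ i < m, 1+a-b+(i:ℚ) ≠ 0) (hC : ∀ i < m, 1+a-c+(i:ℚ) ≠ 0) (hD : ∀ i < m, 1+a-d+(i:ℚ) ≠ 0)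
   (hE : ∀ i ≤ m, b+c+d-a-(i:ℚ) ≠ 0) (hA : ∀ i < 2*m, 1+a+(i:ℚ) ≠ 0) :
   ∑ k ∈ Finset.range (m+1), dT a b c d m k =
     a * (poch (1+a) m * poch (1+a-b-c) m * poch (1+a-b-d) m * poch (1+a-c-d) m /
      (poch (1+a-b) m * poch (1+a-c) m * poch (1+a-d) m * poch (1+a-b-c-d) m)) := by
  induction m with
  | zero => simp [dT, poch_zero]
  | succ m ih =>
    have h := dsum a b c d m (m+1) hB hC hD hE hA le_rfl
    have ih := ih (fun i hi => hB i (by omega)) (fun i hi => hC i (by omega)) (fun i hi => hD i (by omega))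
      (fun i hi => hE i (by omega)) (fun i hi => hA i (by omega))
    rw [Finset.sum_sub_distrib, ← Finset.mul_sum, Finset.sum_range_succ (fun k => dT a b c d m k), ih] at h
    have h0 : dT a b c d m (m+1) = 0 := by
      simp [dT, poch_neg_zero m (m+1) (by omega)]
    have h1 : dG a b c d m (m+1) = 0 := by
      simp [dG, poch_neg_zero m (m+1) (by omega)]
    rw [h0, h1, add_zero, sub_eq_zero] at h
    rw [h]
    simp only [poch_succ, dR]
    simp only [div_eq_mul_inv, mul_inv]
    ring

theorem third_ne (z : ℤ) (x : ℚ) (h : 3 * x = z) (hz : z % 3 ≠ 0) : x ≠ 0 := by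
  rintro rfl
  have : (z:ℚ) = 0 := by rw [← h]; ring
  have : z = 0 := by exact_mod_cast this
  subst this; simp at hz

theorem ratio13 (k : ℕ) : poch (-1/3) k / poch (5/3) k = -2 / ((3*k-1)*(3*k+2)) := by
  induction k with
  | zero => simp [poch_zero]
  | succ k ih =>
    have h1 : (3*(k:ℚ)-1) ≠ 0 := by
      have : (3*(k:ℤ)-1) ≠ 0 := by omega
      exact_mod_cast this
    have h2 : (3*(k:ℚ)+2) ≠ 0 := by positivity
    have h3 : (3*((k:ℚ)+1)+2) ≠ 0 := by positivity
    have h4 : (3*((k:ℚ)+1)-1) ≠ 0 := by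
      have : (3*((k:ℤ)+1)-1) ≠ 0 := by omega
      exact_mod_cast this
    have h5 : (5/3 + (k:ℚ)) ≠ 0 := by positivity
    rw [poch_succ, poch_succ, mul_div_mul_comm, ih]
    push_cast
    rw [div_mul_div_comm, div_eq_div_iff (by positivity) (by positivity)]
    ring

/-- The inner summand. -/
def bU (j k : ℕ) : ℚ := poch (1/3+k) j * poch (-(k:ℚ)) j / (poch (4/3-k) j * poch (5/3+k) j)
def bV (j N : ℕ) : ℚ := poch (1/3+N) j * poch (1-(N:ℚ)) j / (poch (4/3-N) j * poch (2/3+N) j)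
def bP (N : ℕ) : ℚ := poch (1/3) N / N.factorial

theorem expand (k : ℕ) : bP k ^ 3 = -2 / ((3*k-1)*(3*k+2)) *
    ∑ j ∈ Finset.range (k+1), (3*j+1) * (poch (2/3) j / j.factorial)^4 * bU j k := by
  have hd := dougall (2/3) (2/3) (2/3) (2/3) k
    (fun i _ => by positivity) (fun i _ => by positivity) (fun i _ => by positivity)
    (fun i _ => third_ne (4 - 3*i) _ (by push_cast; ring) (by omega))
    (fun i _ => by positivity)
  have p1 : ∀ k : ℕ, poch 1 k = k.factorial := by
    intro k
    induction k with
    | zero => simp [poch_zero]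
    | succ k ih => rw [poch_succ, ih, Nat.factorial_succ]; push_cast; ring
  rw [show (1 + 2/3 - 2/3 : ℚ) = 1 by norm_num, show (1 - 2/3 : ℚ) = 1/3 by norm_num, show (1 + 2/3 : ℚ) = 5/3 by norm_num,
    show (1/3 - 2/3 : ℚ) = -1/3 by norm_num, p1] at hd
  have hs : ∀ j ∈ Finset.range (k+1), dT (2/3) (2/3) (2/3) (2/3) k j = 2/3 * ((3*j+1) * (poch (2/3) j / j.factorial)^4 * bU j k) := by
    intro j _
    unfold dT bU
    rw [show (1 + 2/3 - 2/3 : ℚ) = 1 by norm_num, p1, show (1 + 2*(2/3) - 2/3 - 2/3 - 2/3 + k : ℚ) = 1/3 + k by ring,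
      show (2/3+2/3+2/3-2/3-k : ℚ) = 4/3 - k by ring, show (1+2/3+k:ℚ) = 5/3+k by ring]
    simp only [div_eq_mul_inv, mul_inv]
    ring
  rw [Finset.sum_congr rfl hs, ← Finset.mul_sum] at hd
  have hd' := mul_left_cancel₀ (by norm_num) hd
  rw [hd', ← ratio13]
  have h1 : poch (-1/3) k ≠ 0 := poch_ne _ _ fun i _ => third_ne (-1+3*i) _ (by push_cast; ring) (by omega)
  have h2 : poch (5/3) k ≠ 0 := poch_ne _ _ fun i _ => by positivity
  have h3 : (k.factorial:ℚ) ≠ 0 := by exact_mod_cast k.factorial_ne_zero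
  unfold bP
  generalize poch (-1/3) k = X at *
  field_simp


theorem is0 (n X : ℚ) (h1 : 3*n-1 ≠ 0) (h2 : 3*n+2 ≠ 0) (h4 : n+1 ≠ 0) :
   54 * (n+1)^3 / (3*n+2) * (X * (1/3+n)/(n+1))^3 * (1*1/(1*1)) / (3*0+1)^2 - 54 * n^3 / (3*n-1) * X^3 * (1*1/(1*1)) / (3*0+1)^2
    = (6*n+1) * X ^3 * (-2 / ((3*n-1)*(3*n+2))) * (1*1/(1*1)) := by
  have e : 54 * (n+1)^3 / (3*n+2) * (X * (1/3+n)/(n+1))^3 = 54 * X^3 * (1/3+n)^3 / (3*n+2) := by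
    field_simp
  rw [e]
  have e2 : (6*n+1) * X ^3 * (-2 / ((3*n-1)*(3*n+2))) * (1*1/(1*1)) = (6*n+1) * X ^3 * (-2) / ((3*n-1)*(3*n+2)) := by ring
  have e3 : 54 * X^3 * (1/3+n)^3 / (3*n+2) * (1*1/(1*1)) / (3*0+1)^2 - 54 * n^3 / (3*n-1) * X^3 * (1*1/(1*1)) / (3*0+1)^2 =
    54 * X^3 * (1/3+n)^3 / (3*n+2) - 54 * n^3 * X^3 / (3*n-1) := by ring
  rw [e2, e3, div_sub_div _ _ h2 h1, div_eq_div_iff (by positivity) (by positivity)]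
  ring

theorem is1 (n J X1 X2 X3 X4 X5 : ℚ) (h1 : 3*n-1 ≠ 0) (h2 : 3*n+2 ≠ 0) (h4 : n+1 ≠ 0) (h3 : 3*(J+1)+1 ≠ 0)
   (a2 : X2 ≠ 0) (a3 : X3 ≠ 0) (a4 : 1/3-n ≠ 0) (a5 : 1/3-n+(J+1) ≠ 0) (a6 : 2/3+n ≠ 0) (a7 : 2/3+n+(J+1) ≠ 0) (a8 : 1/3+n ≠ 0) :
   54 * (n + 1) ^ 3 / (3 * n + 2) * (X5 * (1 / 3 + n) / (n + 1)) ^ 3 *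
          (X1 * (1 / 3 + n + (J + 1)) / (1 / 3 + n) * (-n * X4) /
            (X2 * (1 / 3 - n) / (1 / 3 - n + (J + 1)) * (X3 * (2 / 3 + n + (J + 1)) / (2 / 3 + n)))) /
        (3 * (J + 1) + 1) ^ 2 -
      54 * n ^ 3 / (3 * n - 1) * X5 ^ 3 * (X1 * (X4 * (1 - n + J)) / (X2 * X3)) / (3 * (J + 1) + 1) ^ 2 =
    (6 * n + 1) * X5 ^ 3 * (-2 / ((3 * n - 1) * (3 * n + 2))) *
      (X1 * (-n * X4) / (X2 * (X3 * (2 / 3 + n + (J + 1)) / (2 / 3 + n)))) := by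
  have e1 : 54 * (n + 1) ^ 3 / (3 * n + 2) * (X5 * (1 / 3 + n) / (n + 1)) ^ 3 *
          (X1 * (1 / 3 + n + (J + 1)) / (1 / 3 + n) * (-n * X4) /
            (X2 * (1 / 3 - n) / (1 / 3 - n + (J + 1)) * (X3 * (2 / 3 + n + (J + 1)) / (2 / 3 + n)))) /
        (3 * (J + 1) + 1) ^ 2 = X5^3 * X1 * X4 / (X2 * X3) * (54 * (1/3+n)^2 * (1 / 3 + n + (J + 1)) * (-n) * (1 / 3 - n + (J + 1)) * (2/3+n) /
          ((3*n+2) * (1/3-n) * (2 / 3 + n + (J + 1)) * (3 * (J + 1) + 1) ^ 2)) := by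
    generalize 1/3+n+(J+1) = y1 at *
    generalize 1/3-n+(J+1) = y2 at *
    generalize 2/3+n+(J+1) = y3 at *
    generalize 3*(J+1)+1 = y4 at *
    generalize 1/3-n = y5 at *
    generalize 1/3+n = y6 at *
    generalize 2/3+n = y7 at *
    generalize 3*n+2 = y8 at *
    field_simp
  have e2 : 54 * n ^ 3 / (3 * n - 1) * X5 ^ 3 * (X1 * (X4 * (1 - n + J)) / (X2 * X3)) / (3 * (J + 1) + 1) ^ 2
       = X5^3 * X1 * X4 / (X2 * X3) * (54 * n^3 * (1-n+J) / ((3*n-1)* (3 * (J + 1) + 1) ^ 2)) := by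
    simp only [div_eq_mul_inv, mul_inv]; ring
  have e3 : (6 * n + 1) * X5 ^ 3 * (-2 / ((3 * n - 1) * (3 * n + 2))) *
      (X1 * (-n * X4) / (X2 * (X3 * (2 / 3 + n + (J + 1)) / (2 / 3 + n)))) = 
      X5^3 * X1 * X4 / (X2 * X3) * ((6*n+1) * (2 * n) * (2/3+n)/ ((3 * n - 1) * (3 * n + 2) * (2 / 3 + n + (J + 1)))) := by
    simp only [div_eq_mul_inv, mul_inv, inv_inv]; ring
  rw [e1, e2, e3, ← mul_sub]
  congr 1
  rw [div_sub_div _ _ (by positivity) (by positivity), div_eq_div_iff (by positivity) (by positivity)]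
  ring

theorem inner_step (j N : ℕ) :
   54 * (N+1:ℚ)^3 / (3*N+2) * bP (N+1)^3 * bV j (N+1) / (3*j+1)^2 - 54 * (N:ℚ)^3 / (3*N-1) * bP N^3 * bV j N / (3*j+1)^2
    = (6*N+1) * bP N ^3 * (-2 / ((3*N-1)*(3*N+2))) * bU j N := by
  have h1 : (3*(N:ℚ)-1) ≠ 0 := by
    have : (3*(N:ℤ)-1) ≠ 0 := by omega
    exact_mod_cast this
  have h2 : (3*(N:ℚ)+2) ≠ 0 := by positivity
  have h3 : (3*(j:ℚ)+1) ≠ 0 := by positivity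
  have h4 : ((N:ℚ)+1) ≠ 0 := by positivity
  have hP : bP (N+1) = bP N * (1/3 + N) / (N+1) := by
    unfold bP
    rw [poch_succ, Nat.factorial_succ]; push_cast; 
    have : (N.factorial:ℚ) ≠ 0 := by exact_mod_cast N.factorial_ne_zero
    field_simp
  rw [hP]
  cases j with
  | zero =>
    simp only [bU, bV, poch_zero]
    generalize bP N = X
    push_cast
    generalize (N:ℚ) = n at *
    exact is0 n X h1 h2 h4
  | succ j =>
    have a1 : poch (1/3+(N:ℚ)) (j+1) ≠ 0 := poch_ne _ _ fun i _ => by positivity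
    have a2 : poch (4/3-(N:ℚ)) (j+1) ≠ 0 := poch_ne _ _ fun i _ => third_ne (4-3*N+3*i) _ (by push_cast; ring) (by omega)
    have a3 : poch (2/3+(N:ℚ)) (j+1) ≠ 0 := poch_ne _ _ fun i _ => by positivity
    have a4 : (1/3-(N:ℚ)) ≠ 0 := third_ne (1-3*N) _ (by push_cast; ring) (by omega)
    have a5 : (1/3-(N:ℚ)+(j+1)) ≠ 0 := third_ne (1-3*N+3*(j+1)) _ (by push_cast; ring) (by omega)
    have a6 : (2/3+(N:ℚ)) ≠ 0 := by positivity
    have a7 : (2/3+(N:ℚ)+(j+1)) ≠ 0 := by positivity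
    have a8 : (1/3+(N:ℚ)) ≠ 0 := by positivity
    have e1 : poch (1/3+((N+1:ℕ):ℚ)) (j+1) = poch (1/3+(N:ℚ)) (j+1) * (1/3+N+(j+1)) / (1/3+N) := by
      rw [eq_div_iff a8]
      have := poch_succ' (1/3+(N:ℚ)) (j+1)
      rw [poch_succ _ (j+1)] at this
      push_cast at this ⊢
      rw [show (1/3+((N:ℚ)+1)) = 1/3+N+1 by ring]
      linear_combination -this
    have e2 : poch (4/3-((N+1:ℕ):ℚ)) (j+1) = poch (4/3-(N:ℚ)) (j+1) * (1/3-N) / (1/3-N+(j+1)) := by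
      rw [eq_div_iff a5]
      have := poch_succ' (1/3-(N:ℚ)) (j+1)
      rw [poch_succ _ (j+1)] at this
      push_cast at this ⊢
      rw [show (4/3-((N:ℚ)+1)) = 1/3-N by ring, show (4/3-(N:ℚ)) = 1/3-N+1 by ring]
      linear_combination this
    have e3 : poch (2/3+((N+1:ℕ):ℚ)) (j+1) = poch (2/3+(N:ℚ)) (j+1) * (2/3+N+(j+1)) / (2/3+N) := by
      rw [eq_div_iff a6]
      have := poch_succ' (2/3+(N:ℚ)) (j+1)
      rw [poch_succ _ (j+1)] at this
      push_cast at this ⊢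
      rw [show (2/3+((N:ℚ)+1)) = 2/3+N+1 by ring]
      linear_combination -this
    have e3' : (5/3+(N:ℚ)) = 2/3+((N+1:ℕ):ℚ) := by push_cast; ring
    have e4 : poch (1-((N+1:ℕ):ℚ)) (j+1) = -N * poch (1-N) j := by
      rw [poch_succ']; congr 1
      · push_cast; ring
      · congr 1; push_cast; ring
    have e4' : poch (-(N:ℚ)) (j+1) = -N * poch (1-N) j := by
      rw [poch_succ']; congr 2; ring
    unfold bU bV
    rw [e3', e1, e2, e3, e4, e4', poch_succ (1-(N:ℚ))]
    generalize poch (1/3+(N:ℚ)) (j+1) = X1 at *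
    generalize poch (4/3-(N:ℚ)) (j+1) = X2 at *
    generalize poch (2/3+(N:ℚ)) (j+1) = X3 at *
    generalize poch (1-(N:ℚ)) j = X4 at *
    generalize bP N = X5
    push_cast at *
    generalize (j:ℚ) = J at *
    generalize (N:ℚ) = n at *
    exact is1 n J X1 X2 X3 X4 X5 h1 h2 h4 h3 a2 a3 a4 a5 a6 a7 a8

theorem binner_sum (j N : ℕ) :
   ∑ k ∈ Finset.range N, (6*k+1) * bP k ^3 * (-2 / ((3*k-1)*(3*k+2))) * bU j k = 54 * (N:ℚ)^3 / (3*N-1) * bP N^3 * bV j N / (3*j+1)^2 := by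
  induction N with
  | zero => simp
  | succ N ih =>
    rw [Finset.sum_range_succ, ih, ← inner_step j N]
    push_cast
    rw [show 3*((N:ℚ)+1)-1 = 3*N+2 by ring]
    ring

theorem bailey (N : ℕ) :
   ∑ k ∈ Finset.range N, (6*k+1) * bP k ^ 6 = 54 * (N:ℚ)^3 / (3*N-1) * bP N^3 *
     ∑ j ∈ Finset.range N, (poch (2/3) j / j.factorial)^4 * bV j N / (3*j+1) := by
  have h1 : ∀ k ∈ Finset.range N, (6*(k:ℚ)+1) * bP k ^ 6 = ∑ j ∈ Finset.range N,
      (3*j+1) * (poch (2/3) j / j.factorial)^4 * ((6*k+1) * bP k ^3 * (-2 / ((3*k-1)*(3*k+2))) * bU j k) := by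
    intro k hk
    have hk := Finset.mem_range.1 hk
    have h2 : ∑ j ∈ Finset.range (k+1), (3*j+1) * (poch (2/3) j / j.factorial)^4 * bU j k =
        ∑ j ∈ Finset.range N, (3*j+1) * (poch (2/3) j / j.factorial)^4 * bU j k := by
      apply Finset.sum_subset (Finset.range_subset_range.2 hk)
      intro j _ hj
      have : k < j := by simpa using hj
      simp [bU, poch_neg_zero k j this]
    rw [show bP k ^ 6 = bP k^3 * bP k^3 by ring]
    nth_rewrite 2 [expand]
    rw [h2, ← mul_assoc, ← mul_assoc, Finset.mul_sum]
    apply Finset.sum_congr rfl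
    intro j _
    ring
  rw [Finset.sum_congr rfl h1, Finset.sum_comm, Finset.mul_sum]
  apply Finset.sum_congr rfl
  intro j _
  rw [← Finset.mul_sum, binner_sum]
  have : (3*(j:ℚ)+1) ≠ 0 := by positivity
  rw [pow_two, ← div_div, ← mul_div_assoc, mul_div_assoc, div_eq_mul_inv (_ * _) (3*(j:ℚ)+1), div_eq_mul_inv _ (3*(j:ℚ)+1)]
  have h : (3*(j:ℚ)+1) * (3*(j:ℚ)+1)⁻¹ = 1 := mul_inv_cancel₀ this
  linear_combination ((poch (2/3) j / j.factorial)^4 * (54 * (N:ℚ)^3 / (3*N-1) * bP N^3 * bV j N ) * (3*(j:ℚ)+1)⁻¹) * h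

def V (p : ℕ) (e : ℤ) (x : ℚ) : Prop := padicNorm p x ≤ (p:ℚ)^(-e)

section Vsec
variable {p : ℕ} [hp : Fact p.Prime]

theorem V_zero (e : ℤ) : V p e 0 := by
  unfold V; rw [padicNorm.zero]; exact zpow_nonneg (Nat.cast_nonneg _) _
theorem V_add {e : ℤ} {x y : ℚ} (hx : V p e x) (hy : V p e y) : V p e (x+y) :=
  le_trans padicNorm.nonarchimedean (max_le hx hy)
theorem V_neg {e : ℤ} {x : ℚ} (hx : V p e x) : V p e (-x) := by
  unfold V; rw [padicNorm.neg]; exact hx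
theorem V_sub {e : ℤ} {x y : ℚ} (hx : V p e x) (hy : V p e y) : V p e (x-y) := by
  rw [sub_eq_add_neg]; exact V_add hx (V_neg hy)
theorem V_sum {ι : Type} {e : ℤ} {s : Finset ι} {f : ι → ℚ} (h : ∀ i ∈ s, V p e (f i)) :
    V p e (∑ i ∈ s, f i) := by
  classical
  revert h
  refine Finset.induction_on s ?_ ?_
  · intro _; simpa using V_zero e
  · intro a s ha ih h
    rw [Finset.sum_insert ha]
    exact V_add (h a (Finset.mem_insert_self _ _)) (ih fun i hi => h i (Finset.mem_insert_of_mem hi))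
theorem V_mul {e f : ℤ} {x y : ℚ} (hx : V p e x) (hy : V p f y) : V p (e+f) (x*y) := by
  unfold V; rw [padicNorm.mul]
  have hp0 : (p:ℚ) ≠ 0 := by exact_mod_cast hp.out.ne_zero
  rw [show -(e+f) = -e + -f by ring, zpow_add₀ hp0]
  exact mul_le_mul hx hy (padicNorm.nonneg _) (zpow_nonneg (Nat.cast_nonneg _) _)
theorem V_mono {e f : ℤ} {x : ℚ} (hx : V p e x) (h : f ≤ e) : V p f x := by
  refine le_trans hx ?_
  exact zpow_le_zpow_right₀ (by exact_mod_cast hp.out.one_lt.le) (by omega)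
theorem V_int (z : ℤ) : V p 0 (z:ℚ) := by
  unfold V; simpa using padicNorm.of_int z
theorem V_nat (z : ℕ) : V p 0 (z:ℚ) := by simpa using V_int (p := p) (z:ℤ)
theorem V_one : V p 0 (1:ℚ) := by simpa using V_int (p := p) 1
theorem V_mul0 {e : ℤ} {x y : ℚ} (hx : V p e x) (hy : V p 0 y) : V p e (x*y) := by
  simpa using V_mul hx hy
theorem V_0mul {e : ℤ} {x y : ℚ} (hx : V p 0 x) (hy : V p e y) : V p e (x*y) := by
  simpa using V_mul hx hy
theorem V_pow {e : ℤ} {x : ℚ} (hx : V p e x) (n : ℕ) : V p (n*e) (x^n) := by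
  induction n with
  | zero => simpa using V_one
  | succ n ih => rw [pow_succ]; have := V_mul ih hx; push_cast; rwa [add_mul, one_mul]
theorem V_pow0 {x : ℚ} (hx : V p 0 x) (n : ℕ) : V p 0 (x^n) := by simpa using V_pow hx n
theorem V_prod {ι : Type} {s : Finset ι} {f : ι → ℚ} (h : ∀ i ∈ s, V p 0 (f i)) :
    V p 0 (∏ i ∈ s, f i) := by
  classical
  revert h
  refine Finset.induction_on s ?_ ?_
  · intro _; simpa using V_one
  · intro a s ha ih h
    rw [Finset.prod_insert ha]
    exact V_mul0 (h a (Finset.mem_insert_self _ _)) (ih fun i hi => h i (Finset.mem_insert_of_mem hi))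
theorem V_dvd {e : ℕ} {z : ℤ} (h : ((p:ℤ)^e) ∣ z) : V p e (z:ℚ) := by
  have := (padicNorm.dvd_iff_norm_le (p := p) (n := e) (z := z)).1 (by exact_mod_cast h)
  exact this
theorem V_p : V p 1 (p:ℚ) := by
  have := V_dvd (p := p) (e := 1) (z := p) (by simp)
  simpa using this
theorem V_ppow (s : ℕ) : V p s ((p:ℚ)^s) := by simpa using V_pow (V_p (p := p)) s

/-- units -/
def U (p : ℕ) (x : ℚ) : Prop := padicNorm p x = 1

theorem U_V {x : ℚ} (h : U p x) : V p 0 x := by unfold V; unfold U at h; simp [h]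
theorem U_ne {x : ℚ} (h : U p x) : x ≠ 0 := by
  rintro rfl; unfold U at h; simp at h
theorem U_inv {x : ℚ} (h : U p x) : U p x⁻¹ := by
  unfold U at *
  have h2 := padicNorm.div (p := p) 1 x
  rw [h] at h2; simpa using h2
theorem U_mul {x y : ℚ} (h : U p x) (h' : U p y) : U p (x*y) := by
  unfold U at *; rw [padicNorm.mul, h, h', one_mul]
theorem U_one : U p 1 := by unfold U; simp
theorem U_neg {x : ℚ} (h : U p x) : U p (-x) := by unfold U at *; rw [padicNorm.neg, h]
theorem U_div {x y : ℚ} (h : U p x) (h' : U p y) : U p (x/y) := by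
  rw [div_eq_mul_inv]; exact U_mul h (U_inv h')
theorem U_pow {x : ℚ} (h : U p x) (n : ℕ) : U p (x^n) := by
  induction n with
  | zero => simpa using U_one
  | succ n ih => rw [pow_succ]; exact U_mul ih h
theorem U_prod {ι : Type} {s : Finset ι} {f : ι → ℚ} (h : ∀ i ∈ s, U p (f i)) :
    U p (∏ i ∈ s, f i) := by
  classical
  revert h
  refine Finset.induction_on s ?_ ?_
  · intro _; simpa using U_one
  · intro a s ha ih h
    rw [Finset.prod_insert ha]
    exact U_mul (h a (Finset.mem_insert_self _ _)) (ih fun i hi => h i (Finset.mem_insert_of_mem hi))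
theorem U_int {z : ℤ} (h : ¬ (p:ℤ) ∣ z) : U p (z:ℚ) := (padicNorm.int_eq_one_iff z).2 h
theorem U_nat {z : ℕ} (h : ¬ p ∣ z) : U p (z:ℚ) := by
  have := U_int (p := p) (z := z) (by exact_mod_cast h); simpa using this
/-- division by a unit -/
theorem V_div {e : ℤ} {x y : ℚ} (hx : V p e x) (hy : U p y) : V p e (x/y) := by
  rw [div_eq_mul_inv]; exact V_mul0 hx (U_V (U_inv hy))
theorem U_add {x y : ℚ} (hx : U p x) (hy : V p 1 y) : U p (x+y) := by
  have h1 : padicNorm p y < 1 := by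
    refine lt_of_le_of_lt hy ?_
    have : (1:ℚ) < p := by exact_mod_cast hp.out.one_lt
    simpa using inv_lt_one_of_one_lt₀ this
  unfold U at *
  rw [padicNorm.add_eq_max_of_ne (by rw [hx]; exact h1.ne'), hx, max_eq_left h1.le]
theorem V_sub_trans {e : ℤ} {x y z : ℚ} (h : V p e (x-y)) (h' : V p e (y-z)) : V p e (x-z) := by
  have := V_add h h'; simpa using this
theorem V_comm {e : ℤ} {x y : ℚ} (h : V p e (x-y)) : V p e (y-x) := by
  have := V_neg h; simpa using this
theorem V_congmul {e : ℤ} {x y x' y' : ℚ} (hx : V p 0 x) (hy' : V p 0 y') (h : V p e (x-x')) (h' : V p e (y-y')) :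
    V p e (x*y-x'*y') := by
  rw [show x*y-x'*y' = x*(y-y') + (x-x')*y' by ring]
  exact V_add (V_0mul hx h') (V_mul0 h hy')
theorem V_of_val {e : ℤ} {x : ℚ} (hx : x ≠ 0) (h : e ≤ padicValRat p x) : V p e x := by
  unfold V; rw [padicNorm.eq_zpow_of_nonzero hx]
  exact zpow_le_zpow_right₀ (by exact_mod_cast hp.out.one_lt.le) (by omega)
theorem val_of_V {e : ℤ} {x : ℚ} (hx : x ≠ 0) (h : V p e x) : e ≤ padicValRat p x := by
  unfold V at h; rw [padicNorm.eq_zpow_of_nonzero hx] at h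
  have := (zpow_le_zpow_iff_right₀ (a := (p:ℚ)) (by exact_mod_cast hp.out.one_lt)).1 h
  omega
theorem V_pcong {m : ℕ} {a b : ℚ} (h : V p m (a-b)) : pcong p m a b := by
  by_cases hab : a - b = 0
  · left; linarith
  · right; exact val_of_V hab h
end Vsec

theorem root_ex (n c : ℕ) (hn : 0 < n) (h3 : n % 3 ≠ 0) (hc : c = 1 ∨ c = 2) :
    ∃ r, n ∣ 3*r+c := by
  have : n % 3 = 1 ∨ n % 3 = 2 := by omega
  rcases this with h | h <;> rcases hc with rfl | rfl
  · exact ⟨(n-1)/3, 1, by omega⟩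
  · exact ⟨(2*n-2)/3, 2, by omega⟩
  · exact ⟨(2*n-1)/3, 2, by omega⟩
  · exact ⟨(n-2)/3, 1, by omega⟩

theorem cnt (n c k r : ℕ) (hn : 0 < n) (h3 : n % 3 ≠ 0) (hr : n ∣ 3*r+c) :
    ((range k).filter (fun l => n ∣ 3*l+c)).card = k / n + if r % n < k % n then 1 else 0 := by
  rw [← Nat.count_modEq_card k hn r, Nat.count_eq_card_filter_range]
  congr 1
  ext l
  simp only [Finset.mem_filter, and_congr_right_iff]
  intro _
  have hco : Nat.Coprime n 3 := by
    rw [Nat.coprime_comm]; exact (Nat.Prime.coprime_iff_not_dvd Nat.prime_three).2 (by omega)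
  constructor
  · intro h
    have h1 : 3*l+c ≡ 3*r+c [MOD n] := by
      exact ((Nat.modEq_zero_iff_dvd).2 h).trans ((Nat.modEq_zero_iff_dvd).2 hr).symm
    have h2 := Nat.ModEq.add_right_cancel' c h1
    exact Nat.ModEq.cancel_left_of_coprime (by simpa using hco) h2
  · intro h
    exact (Nat.modEq_zero_iff_dvd).1 (((h.mul_left 3).add_right c).trans ((Nat.modEq_zero_iff_dvd).2 hr))

theorem vprod (p : ℕ) (hp : p.Prime) (c k b : ℕ) (hc : 0 < c) (hb : ∀ l < k, 3*l+c < p^b) :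
    (∏ l ∈ range k, (3*l+c)).factorization p = ∑ i ∈ Ico 1 b, ((range k).filter (fun l => p^i ∣ 3*l+c)).card := by
  rw [Nat.factorization_prod (fun x _ => by omega), Finsupp.finsetSum_apply]
  rw [Finset.sum_congr rfl (fun l hl => Nat.factorization_eq_card_pow_dvd_of_lt hp (by omega) (hb l (Finset.mem_range.1 hl)))]
  simp only [Finset.card_filter]
  rw [Finset.sum_comm]

theorem Vx (p : ℕ) [hp : Fact p.Prime] (hp3 : p % 3 ≠ 0) (c k : ℕ) (hc : c = 1 ∨ c = 2) (I : Finset ℕ)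
    (hI : ∀ i ∈ I, 1 ≤ i ∧ ∃ r, r % p^i < k % p^i ∧ p^i ∣ 3*r+c) :
    V p I.card (poch ((c:ℚ)/3) k / k.factorial) := by
  have hco : ∀ i, p^i % 3 ≠ 0 := by
    intro i h
    have := Nat.prime_three.dvd_of_dvd_pow (Nat.dvd_of_mod_eq_zero h)
    omega
  have hpos : ∀ i, 0 < p^i := fun i => pow_pos hp.out.pos i
  obtain ⟨b, hb⟩ : ∃ b, 3*k+c < p^b ∧ I ⊆ Ico 1 b := by
    refine ⟨3*k+c + ∑ i ∈ I, i + 1, ?_, ?_⟩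
    · have h1 := Nat.lt_pow_self (n := 3*k+c + ∑ i ∈ I, i + 1) hp.out.one_lt
      omega
    · intro i hi
      have h1 := Finset.single_le_sum (f := fun i => i) (fun _ _ => Nat.zero_le _) hi
      have h2 := (hI i hi).1
      simp only [Finset.mem_Ico]; omega
  have h1 := vprod p hp.out c k b (by omega) (fun l hl => by omega)
  have h2 := Nat.factorization_factorial hp.out (n := k) (b := b)
    (by
      apply Nat.log_lt_of_lt_pow' (by have := hb.1; rcases b with _ | b <;> simp_all) 
      omega)
  have h3 : k.factorial.factorization p + I.card ≤ (∏ l ∈ range k, (3*l+c)).factorization p := by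
    rw [h1, h2]
    have : I.card = ∑ i ∈ Ico 1 b, if i ∈ I then 1 else 0 := by
      rw [Finset.sum_ite_mem, Finset.inter_eq_right.2 hb.2]; simp
    rw [this, ← Finset.sum_add_distrib]
    apply Finset.sum_le_sum
    intro i hi
    split_ifs with h
    · obtain ⟨_, r, hr, hr'⟩ := hI i h
      rw [cnt (p^i) c k r (hpos i) (hco i) hr', if_pos hr]
    · obtain ⟨r, hr⟩ := root_ex (p^i) c (hpos i) (hco i) hc
      rw [cnt (p^i) c k r (hpos i) (hco i) hr]; omega
  have hx : poch ((c:ℚ)/3) k / k.factorial = ((∏ l ∈ range k, (3*l+c) : ℕ):ℚ) / k.factorial / 3^k := by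
    have : poch ((c:ℚ)/3) k * 3^k = ((∏ l ∈ range k, (3*l+c) : ℕ):ℚ) := by
      unfold poch
      have h3k : (3:ℚ)^k = ∏ _l ∈ range k, (3:ℚ) := by simp
      rw [h3k, ← Finset.prod_mul_distrib]
      push_cast
      apply Finset.prod_congr rfl; intro l _; ring
    rw [← this]; field_simp
  rw [hx]
  have hP : (∏ l ∈ range k, (3*l+c)) ≠ 0 := Finset.prod_ne_zero_iff.2 (fun l _ => by omega)
  apply V_div
  · apply V_of_val
    · apply div_ne_zero <;> exact_mod_cast (by first | exact hP | exact Nat.factorial_ne_zero k)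
    · rw [padicValRat.div (by exact_mod_cast hP) (by exact_mod_cast Nat.factorial_ne_zero k),
        padicValRat.of_nat, padicValRat.of_nat, ← Nat.factorization_def _ hp.out, ← Nat.factorization_def _ hp.out]
      omega
  · apply U_pow
    have := U_nat (p := p) (z := 3) (by
      intro h; rcases (Nat.dvd_prime Nat.prime_three).1 h with h | h
      · exact hp.out.one_lt.ne' h
      · omega)
    simpa using this

theorem V13 (p : ℕ) [hp : Fact p.Prime] (hp3 : p % 3 ≠ 0) (k : ℕ) : V p 0 (bP k) := by
  have := Vx p hp3 1 k (Or.inl rfl) ∅ (by simp)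
  simpa [bP] using this
theorem V23 (p : ℕ) [hp : Fact p.Prime] (hp3 : p % 3 ≠ 0) (k : ℕ) : V p 0 (poch (2/3) k / k.factorial) := by
  have := Vx p hp3 2 k (Or.inr rfl) ∅ (by simp)
  simpa using this
theorem resid (n k : ℕ) (hn : n % 3 = 2) (h : n ∣ 3*k+1) : k % n = (2*n-1)/3 := by
  have h1 : n ∣ 3*(k%n)+1 := by
    have h2 := Nat.mod_add_div k n
    have : n ∣ 3*(k%n) + 1 + n*(3*(k/n)) := by
      rwa [show 3*(k%n) + 1 + n*(3*(k/n)) = 3*(k % n + n*(k/n)) + 1 by ring, h2]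
    exact (Nat.dvd_add_left (Dvd.intro _ rfl)).1 this
  have hlt := Nat.mod_lt k (show n > 0 by omega)
  obtain ⟨t, ht⟩ := h1
  have ht3 : t < 3 := by
    by_contra hh; push Not at hh
    have := Nat.mul_le_mul_left n hh; omega
  interval_cases t <;> omega
theorem X1 (p : ℕ) [hp : Fact p.Prime] (hp3 : p % 3 = 2) (k : ℕ) (h : p ∣ 3*k+1) :
    V p 1 (poch (2/3) k / k.factorial) := by
  have := Vx p (by omega) 2 k (Or.inr rfl) {1} (by
    intro i hi
    simp only [Finset.mem_singleton] at hi; subst hi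
    refine ⟨le_refl _, (p-2)/3, ?_, 1, by rw [pow_one]; omega⟩
    rw [pow_one, resid p k hp3 h]
    have := Nat.mod_le ((p-2)/3) p
    omega)
  simpa using this
theorem X2 (p : ℕ) [hp : Fact p.Prime] (hp3 : p % 3 = 2) (k : ℕ) (h : p^3 ∣ 3*k+1) :
    V p 2 (poch (2/3) k / k.factorial) := by
  have key : ∀ i, p^i % 3 = 2 → p^i ∣ 3*k+1 → ∃ r, r % p^i < k % p^i ∧ p^i ∣ 3*r+2 := by
    intro i h1 h2
    refine ⟨(p^i-2)/3, ?_, 1, by omega⟩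
    rw [resid (p^i) k h1 h2]
    have := Nat.mod_le ((p^i-2)/3) (p^i)
    omega
  have h33 : p^3 % 3 = 2 := by rw [Nat.pow_mod, hp3]
  have := Vx p (by omega) 2 k (Or.inr rfl) {1,3} (by
    intro i hi
    simp only [Finset.mem_insert, Finset.mem_singleton] at hi
    rcases hi with rfl | rfl
    · exact ⟨by omega, key 1 (by simpa using hp3) (by rw [pow_one]; exact (dvd_pow_self p (by norm_num)).trans h)⟩
    · exact ⟨by omega, key 3 h33 h⟩)
  simpa using this
theorem V13' (p : ℕ) [hp : Fact p.Prime] (hp3 : p % 3 = 2) (k : ℕ) (h : 2*p-1 < 3*k) (h' : k < p) : V p 1 (bP k) := by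
  have := Vx p (by omega) 1 k (Or.inl rfl) {1} (by
    intro i hi
    simp only [Finset.mem_singleton] at hi; subst hi
    refine ⟨le_refl _, (2*p-1)/3, ?_, 2, by rw [pow_one]; omega⟩
    rw [pow_one, Nat.mod_eq_of_lt h']
    have := Nat.mod_le ((2*p-1)/3) p
    omega)
  simpa [bP] using this

section Hsec
variable {p : ℕ} [hp : Fact p.Prime]
theorem V_invpow (e : ℕ) : V p (-e) (((p:ℚ)^e)⁻¹) := by
  have hp0 : (p:ℚ) ≠ 0 := by exact_mod_cast hp.out.ne_zero
  apply V_of_val (inv_ne_zero (pow_ne_zero _ hp0))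
  rw [padicValRat.inv, padicValRat.pow, padicValRat.self hp.out.one_lt]; simp

theorem V_inv_int (z : ℤ) (hz : z ≠ 0) : ∃ e : ℕ, (p:ℤ)^e ∣ z ∧ V p (-e) ((z:ℚ)⁻¹) := by
  obtain ⟨e, u, hu, hzu⟩ := (Int.finiteMultiplicity_iff.2 ⟨by simpa using hp.out.ne_one, hz⟩ : FiniteMultiplicity (p:ℤ) z).exists_eq_pow_mul_and_not_dvd |> fun ⟨c, h1, h2⟩ => (⟨_, c, h2, h1⟩ : ∃ e : ℕ, ∃ u : ℤ, ¬ (p:ℤ) ∣ u ∧ z = (p:ℤ)^e * u)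
  refine ⟨e, ⟨u, hzu⟩, ?_⟩
  rw [hzu]; push_cast; rw [mul_inv]
  exact V_mul0 (V_invpow e) (U_V (U_inv (U_int hu)))

theorem Qdiv (s : ℕ) (z : ℤ) (hz : ¬ (p:ℤ)^(s+1) ∣ z) : V p 0 ((p:ℚ)^s/z) := by
  have hz0 : z ≠ 0 := by rintro rfl; simp at hz
  obtain ⟨e, he, hv⟩ := V_inv_int (p := p) z hz0
  have : e ≤ s := by
    by_contra h; push Not at h
    exact hz ((pow_dvd_pow _ h).trans he)
  rw [div_eq_mul_inv]
  exact V_mono (V_mul (V_ppow s) hv) (by omega)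

theorem Qfac (s : ℕ) (w t : ℤ) (x y : ℚ) (hw : ¬ (p:ℤ)^(s+1) ∣ w) (hy : 3*y = w) (hx : 3*x = w + t*(p:ℚ)^s) :
    V p 0 (x/y) := by
  have hw0 : (w:ℚ) ≠ 0 := by
    intro h; have : w = 0 := by exact_mod_cast h
    subst this; simp at hw
  have : x/y = 1 + t*((p:ℚ)^s/w) := by
    rw [show x = (w + t*(p:ℚ)^s)/3 by linarith, show y = w/3 by linarith]
    field_simp
  rw [this]
  exact V_add V_one (V_0mul (V_int t) (Qdiv s w hw))

theorem nd (s : ℕ) (hp5 : 5 ≤ p) (w : ℤ) (h0 : w ≠ 0) (h1 : |w| < 5*(p:ℤ)^s) : ¬ (p:ℤ)^(s+1) ∣ w := by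
  intro h
  have h2 := Int.le_of_dvd (abs_pos.2 h0) ((dvd_abs _ _).2 h)
  have h5 : (5:ℤ) ≤ p := by exact_mod_cast hp5
  have h3 : (0:ℤ) < (p:ℤ)^s := pow_pos (by omega) s
  rw [pow_succ] at h2
  nlinarith

theorem nd' (s : ℕ) (hp5 : 5 ≤ p) (hs : p^s % 3 = 2) (hp3 : p % 3 = 2) (w : ℤ) (h3 : w % 3 = 2) (h0 : 0 < w) (h1 : w < 6*(p:ℤ)^s) :
    ¬ (p:ℤ)^(s+1) ∣ w := by
  intro h
  obtain ⟨t, ht⟩ := h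
  have h5 : (5:ℤ) ≤ p := by exact_mod_cast hp5
  have hps : (0:ℤ) < (p:ℤ)^s := pow_pos (by omega) s
  have hm : (p:ℤ)^(s+1) % 3 = 1 := by
    have : p^(s+1) % 3 = 1 := by rw [pow_succ, Nat.mul_mod, hs, hp3]
    exact_mod_cast this
  have hP : (p:ℤ)^(s+1) = (p:ℤ)^s * p := pow_succ _ _
  have ht0 : 0 < t := by
    by_contra hh; push Not at hh
    have : (p:ℤ)^(s+1) * t ≤ 0 := mul_nonpos_of_nonneg_of_nonpos (by positivity) hh
    omega
  have ht1 : t < 2 := by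
    by_contra hh; push Not at hh
    have : 6*(p:ℤ)^s ≤ (p:ℤ)^(s+1) * t := by rw [hP]; nlinarith [mul_le_mul hh h5 (by norm_num) (by omega)]
    omega
  have : t = 1 := by omega
  subst this; omega
end Hsec

theorem three_prod (j : ℕ) : ((3*j+1 : ℕ):ℚ) = ∏ i ∈ range j, ((4/3+(i:ℚ))/(1/3+i)) := by
  induction j with
  | zero => simp
  | succ j ih => rw [Finset.prod_range_succ, ← ih]; push_cast
                 have : (1:ℚ)/3+j ≠ 0 := by positivity
                 field_simp; ring

theorem fac_prod (j : ℕ) : (j.factorial:ℚ) = ∏ i ∈ range j, (1+(i:ℚ)) := by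
  induction j with
  | zero => simp
  | succ j ih => rw [Finset.prod_range_succ, ← ih, Nat.factorial_succ]; push_cast; ring

theorem Yprod (j N : ℕ) : poch (2/3) j / j.factorial * bV j N * ((3*j+1:ℕ):ℚ) =
   ∏ i ∈ range j, (((2/3+(i:ℚ))/(1+i)) * ((1/3+N+i)*(1-N+i)/((4/3-N+i)*(2/3+N+i))) * ((4/3+i)/(1/3+i))) := by
  rw [three_prod, fac_prod]; unfold bV poch
  simp only [Finset.prod_mul_distrib, Finset.prod_div_distrib]

theorem Y1 (p : ℕ) [hp : Fact p.Prime] (hp5 : 5 ≤ p) (s : ℕ) (hp3 : p % 3 = 2) (hs : p^s % 3 = 2) (j : ℕ) (hj : j < p^s) :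
    V p 0 (poch (2/3) j / j.factorial * bV j (p^s) * ((3*j+1:ℕ):ℚ)) := by
  rw [Yprod]
  apply V_prod
  intro i hi
  have hi := Finset.mem_range.1 hi
  push_cast
  have hz : ((p^s:ℕ):ℤ) = (p:ℤ)^s := by push_cast; rfl
  have f1 : V p 0 ((1/3+(p:ℚ)^s+i)/(1/3+i)) := 
    Qfac s (3*i+1) 3 _ _ (nd s hp5 _ (by omega) (by rw [← hz, abs_lt]; constructor <;> omega)) (by push_cast; ring) (by push_cast; ring)
  have f2 : V p 0 ((1-(p:ℚ)^s+i)/(1+i)) := 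
    Qfac s (3*i+3) (-3) _ _ (nd s hp5 _ (by omega) (by rw [← hz, abs_lt]; constructor <;> omega)) (by push_cast; ring) (by push_cast; ring)
  have f3 : V p 0 ((4/3+(i:ℚ))/(4/3-(p:ℚ)^s+i)) := 
    Qfac s (3*i+4-3*(p:ℤ)^s) 3 _ _ (nd s hp5 _ (by omega) (by rw [← hz, abs_lt]; constructor <;> omega)) (by push_cast; ring) (by push_cast; ring)
  have f4 : V p 0 ((2/3+(i:ℚ))/(2/3+(p:ℚ)^s+i)) := 
    Qfac s (3*i+2+3*(p:ℤ)^s) (-3) _ _ (nd' s hp5 hs hp3 _ (by omega) (by rw [← hz]; omega) (by rw [← hz]; omega)) (by push_cast; ring) (by push_cast; ring)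
  have := V_mul0 (V_mul0 (V_mul0 f1 f2) f3) f4
  convert this using 1
  simp only [div_eq_mul_inv, mul_inv]; ring

theorem Y2 (p : ℕ) [hp : Fact p.Prime] (hp5 : 5 ≤ p) (s : ℕ) (hs : p^s % 3 = 2) (M : ℕ) (hM : 3*M+1 = 2*p^s) (j : ℕ) (hj : j ≤ M) :
    V p 0 (poch (2/3) j / j.factorial * bV j (M+1) * ((3*j+1:ℕ):ℚ)) := by
  rw [Yprod]
  apply V_prod
  intro i hi
  have hi := Finset.mem_range.1 hi
  push_cast
  have hz : ((p^s:ℕ):ℤ) = (p:ℤ)^s := by push_cast; rfl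
  have hMq : (M:ℚ) = (2*(p:ℚ)^s-1)/3 := by
    have : (3*M+1:ℚ) = 2*(p:ℚ)^s := by exact_mod_cast hM
    linarith
  rw [hMq]
  have f1 : V p 0 ((1/3+((2*(p:ℚ)^s-1)/3+1)+i)/(1+i)) := 
    Qfac s (3*i+3) 2 _ _ (nd s hp5 _ (by omega) (by rw [← hz, abs_lt]; constructor <;> omega)) (by push_cast; ring) (by push_cast; ring)
  have f2 : V p 0 ((1-((2*(p:ℚ)^s-1)/3+1)+i)/(1/3+i)) := 
    Qfac s (3*i+1) (-2) _ _ (nd s hp5 _ (by omega) (by rw [← hz, abs_lt]; constructor <;> omega)) (by push_cast; ring) (by push_cast; ring)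
  have f3 : V p 0 ((2/3+(i:ℚ))/(4/3-((2*(p:ℚ)^s-1)/3+1)+i)) := 
    Qfac s (3*i+2-2*(p:ℤ)^s) 2 _ _ (nd s hp5 _ (by omega) (by rw [← hz, abs_lt]; constructor <;> omega)) (by push_cast; ring) (by push_cast; ring)
  have f4 : V p 0 ((4/3+(i:ℚ))/(2/3+((2*(p:ℚ)^s-1)/3+1)+i)) := 
    Qfac s (3*i+4+2*(p:ℤ)^s) (-2) _ _ (nd s hp5 _ (by omega) (by rw [← hz, abs_lt]; constructor <;> omega)) (by push_cast; ring) (by push_cast; ring)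
  have := V_mul0 (V_mul0 (V_mul0 f1 f2) f3) f4
  convert this using 1
  simp only [div_eq_mul_inv, mul_inv]; ring

theorem Tterm (p : ℕ) [hp : Fact p.Prime] (hp5 : 5 ≤ p) (hp3 : p % 3 = 2) (s : ℕ) (hs3 : 3 ≤ s) (j N : ℕ) (hj : j < p^s) 
    (hY : V p 0 (poch (2/3) j / j.factorial * bV j N * ((3*j+1:ℕ):ℚ))) :
    V p (5-2*s) ((poch (2/3) j / j.factorial)^4 * bV j N / (3*j+1)) := by
  obtain ⟨e, he, hv⟩ := V_inv_int (p := p) (3*j+1) (by omega)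
  have hz : ((p^s:ℕ):ℤ) = (p:ℤ)^s := by push_cast; rfl
  have hes : e ≤ s := by
    by_contra h; push Not at h
    exact nd (p := p) s hp5 (3*j+1) (by omega) (by rw [← hz, abs_lt]; constructor <;> omega) ((pow_dvd_pow _ h).trans he)
  have he' : p^e ∣ 3*j+1 := by exact_mod_cast he
  have hX : ∃ r : ℕ, V p r (poch (2/3) j / j.factorial) ∧ 5 - 2*(s:ℤ) ≤ 3*r - 2*e := by
    by_cases h1 : e + 3 ≤ s
    · exact ⟨0, V23 p (by omega) j, by push_cast; omega⟩
    by_cases h2 : e + 1 ≤ s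
    · exact ⟨1, X1 p hp3 j ((dvd_pow_self p (by omega)).trans he'), by push_cast; omega⟩
    · exact ⟨2, X2 p hp3 j ((pow_dvd_pow p (by omega)).trans he'), by push_cast; omega⟩
  obtain ⟨r, hr, hre⟩ := hX
  generalize poch (2/3) j / j.factorial = X at *
  have h0 : (3*(j:ℚ)+1) ≠ 0 := by positivity
  have e1 : X^4 * bV j N / (3*j+1) = X^3 * (((3*j+1:ℤ):ℚ)⁻¹)^2 * (X * bV j N * ((3*j+1:ℕ):ℚ)) := by
    push_cast; field_simp
  rw [e1]
  exact V_mono (V_mul0 (V_mul (V_pow hr 3) (V_pow hv 2)) hY) (by push_cast; linarith)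

theorem bP_M (M : ℕ) : ((M+1:ℕ):ℚ) * bP (M+1) = ((3*M+1:ℕ):ℚ)/3 * bP M := by
  unfold bP
  rw [poch_succ, Nat.factorial_succ]
  have : (M.factorial:ℚ) ≠ 0 := by exact_mod_cast Nat.factorial_ne_zero M
  have : ((M:ℚ)+1) ≠ 0 := by positivity
  push_cast; field_simp; ring

theorem bigS (p : ℕ) [hp : Fact p.Prime] (hp5 : 5 ≤ p) (hp3 : p % 3 = 2) (s : ℕ) (hs3 : 3 ≤ s) (hs : p^s % 3 = 2)
    (M : ℕ) (hM : 3*M+1 = 2*p^s) (N : ℕ) (hN : N = M+1 ∨ N = p^s) :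
    V p (s+5) (∑ k ∈ range N, (6*(k:ℚ)+1)*bP k^6) := by
  rw [bailey]
  have h1 : V p (5-2*s) (∑ j ∈ range N, (poch (2/3) j / j.factorial)^4 * bV j N / (3*j+1)) := by
    apply V_sum
    intro j hj
    have hj := Finset.mem_range.1 hj
    apply Tterm p hp5 hp3 s hs3 _ _ (by omega)
    rcases hN with rfl | rfl
    · exact Y2 p hp5 s hs M hM j (by omega)
    · exact Y1 p hp5 s hp3 hs j hj
  have hpd : p ∣ p^s := dvd_pow_self p (by omega)
  have h2 : V p s ((N:ℚ) * bP N) := by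
    rcases hN with rfl | rfl
    · rw [bP_M, hM]; push_cast
      rw [show (2*(p:ℚ)^s/3 * bP M) = (p:ℚ)^s * (2:ℕ) * bP M / (3:ℕ) by push_cast; ring]
      apply V_div (V_mul0 (V_mul0 (V_ppow s) (V_nat 2)) (V13 p (by omega) M))
      apply U_nat; intro h; have := Nat.le_of_dvd (by norm_num) h; omega
    · push_cast; exact V_mul0 (V_ppow s) (V13 p (by omega) _)
  have h3 : U p (3*(N:ℚ)-1) := by
    have : ¬ (p:ℤ) ∣ (3*N-1) := by
      intro h
      have hq : (p:ℤ) ∣ (p^s:ℕ) := by exact_mod_cast hpd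
      have h1p : ¬ (p:ℤ) ∣ 1 := by
        intro h; have := Int.le_of_dvd (by norm_num) h; omega
      apply h1p
      rcases hN with rfl | rfl
      · have e : (1:ℤ) = (3*(M+1:ℕ)-1) - 2*((p^s:ℕ):ℤ) := by omega
        rw [e]; exact dvd_sub h (hq.mul_left _)
      · have e : (1:ℤ) = 3*((p^s:ℕ):ℤ) - (3*((p^s:ℕ):ℤ)-1) := by ring
        rw [e]; exact dvd_sub (hq.mul_left _) h
    have := U_int this
    push_cast at this; exact this
  generalize (∑ j ∈ range N, (poch (2/3) j / j.factorial)^4 * bV j N / (3*j+1) : ℚ) = Z at *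
  have := V_div (V_mul0 (V_mul (V_pow h2 3) h1) (V_nat (p := p) 54)) h3
  have := V_mono this (f := s+5) (by push_cast; linarith)
  convert this using 1
  push_cast; ring

theorem case3 (p : ℕ) [hp : Fact p.Prime] (hp5 : 5 ≤ p) (hp3 : p % 3 = 2) (s : ℕ) (hs3 : 3 ≤ s) (hs : p^s % 3 = 2)
    (M : ℕ) (hM : 3*M+1 = 2*p^s) (N : ℕ) (hN : N = M+1 ∨ N = p^s) :
    V p (s+5) (∑ k ∈ range N, (6*(k:ℚ)+1)*bP k^6 - 10 * (p:ℚ)^s * (poch (2/3) M/M.factorial)^3) := by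
  apply V_sub (bigS p hp5 hp3 s hs3 hs M hM N hN)
  have h2 : V p 2 (poch (2/3) M/M.factorial) := X2 p hp3 M (by rw [hM]; exact (pow_dvd_pow p hs3).mul_left 2)
  have := V_mul (V_mul (V_nat (p := p) 10) (V_ppow s)) (V_pow h2 3)
  have := V_mono this (f := s+5) (by push_cast; omega)
  exact_mod_cast this

section Jsec
variable {p : ℕ} [hp : Fact p.Prime]

theorem V_eval (q : Polynomial ℚ) (hq : ∀ n, V p 0 (q.coeff n)) (y : ℚ) (hy : V p 0 y) : V p 0 (q.eval y) := by
  rw [Polynomial.eval_eq_sum_range]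
  exact V_sum fun i _ => V_mul0 (hq i) (V_pow0 hy i)

variable (p) in
def Good (f : ℚ → ℚ) : Prop :=
  ∃ q : Polynomial ℚ, (∀ n, V p 0 (q.coeff n)) ∧ ∀ y, V p 1 y → V p 6 (f y - q.eval y)

theorem Good_V {f : ℚ → ℚ} (h : Good p f) (y : ℚ) (hy : V p 1 y) : V p 0 (f y) := by
  obtain ⟨q, hq, h⟩ := h
  have := V_add (V_mono (h y hy) (by norm_num : (0:ℤ) ≤ 6)) (V_eval q hq y (V_mono hy (by norm_num)))
  simpa using this

theorem Good_lin {α β : ℚ} (ha : V p 0 α) (hb : V p 0 β) : Good p (fun y => α + β*y) := by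
  refine ⟨Polynomial.C α + Polynomial.C β * Polynomial.X, ?_, ?_⟩
  · intro n
    rcases n with _ | _ | n
    · simpa using ha
    · simpa [Polynomial.coeff_C] using hb
    · simpa [Polynomial.coeff_C, Polynomial.coeff_X] using V_zero 0
  · intro y _; simpa using V_zero 6

theorem Good_const {α : ℚ} (ha : V p 0 α) : Good p (fun _ => α) := by
  simpa using Good_lin (p := p) ha (V_zero 0)

theorem Good_add {f g : ℚ → ℚ} (hf : Good p f) (hg : Good p g) : Good p (fun y => f y + g y) := by
  obtain ⟨q, hq, h⟩ := hf
  obtain ⟨r, hr, h'⟩ := hg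
  refine ⟨q + r, fun n => by rw [Polynomial.coeff_add]; exact V_add (hq n) (hr n), fun y hy => ?_⟩
  rw [Polynomial.eval_add]
  have := V_add (h y hy) (h' y hy)
  convert this using 1; ring

theorem Good_mul {f g : ℚ → ℚ} (hf : Good p f) (hg : Good p g) : Good p (fun y => f y * g y) := by
  have hf' := hf
  obtain ⟨q, hq, h⟩ := hf
  obtain ⟨r, hr, h'⟩ := hg
  refine ⟨q * r, fun n => ?_, fun y hy => ?_⟩
  · rw [Polynomial.coeff_mul]
    exact V_sum fun i _ => V_mul0 (hq _) (hr _)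
  · rw [Polynomial.eval_mul]
    exact V_congmul (Good_V hf' y hy) (V_eval r hr y (V_mono hy (by norm_num))) (h y hy) (h' y hy)

theorem Good_sum {ι : Type} {s : Finset ι} {f : ι → ℚ → ℚ} (h : ∀ i ∈ s, Good p (f i)) :
    Good p (fun y => ∑ i ∈ s, f i y) := by
  classical
  revert h
  refine Finset.induction_on s ?_ ?_
  · intro _; simpa using Good_const (p := p) (V_zero 0)
  · intro a s ha ih h
    simp only [Finset.sum_insert ha]
    exact Good_add (h a (Finset.mem_insert_self _ _)) (ih fun i hi => h i (Finset.mem_insert_of_mem hi))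

theorem Good_prod {ι : Type} {s : Finset ι} {f : ι → ℚ → ℚ} (h : ∀ i ∈ s, Good p (f i)) :
    Good p (fun y => ∏ i ∈ s, f i y) := by
  classical
  revert h
  refine Finset.induction_on s ?_ ?_
  · intro _; simpa using Good_const (p := p) (V_one)
  · intro a s ha ih h
    simp only [Finset.prod_insert ha]
    exact Good_mul (h a (Finset.mem_insert_self _ _)) (ih fun i hi => h i (Finset.mem_insert_of_mem hi))

theorem Good_pow {f : ℚ → ℚ} (hf : Good p f) (n : ℕ) : Good p (fun y => f y ^ n) := by
  have := Good_prod (p := p) (s := range n) (f := fun _ => f) (fun _ _ => hf)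
  simpa using this

theorem Good_inv {γ β : ℚ} (ha : U p γ) (hb : V p 0 β) : Good p (fun y => (γ + β*y)⁻¹) := by
  have hβ : V p 0 (-(β/γ)) := V_neg (V_div hb ha)
  have hγ := U_ne ha
  refine ⟨∑ d ∈ range 6, Polynomial.C (γ⁻¹ * (-(β/γ))^d) * Polynomial.X^d, fun n => ?_, fun y hy => ?_⟩
  · rw [Polynomial.finset_sum_coeff]
    apply V_sum; intro d _
    rw [Polynomial.coeff_C_mul_X_pow]
    split_ifs
    · exact V_mul0 (U_V (U_inv ha)) (V_pow0 hβ d)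
    · exact V_zero 0
  · have hU : U p (γ + β*y) := U_add ha (V_0mul hb hy)
    have hne := U_ne hU
    have e : (γ + β*y)⁻¹ - Polynomial.eval y (∑ d ∈ range 6, Polynomial.C (γ⁻¹ * (-(β/γ))^d) * Polynomial.X^d)
       = (-(β/γ)*y)^6 / (γ + β*y) := by
      simp only [Finset.sum_range_succ, Finset.sum_range_zero, Polynomial.eval_add, Polynomial.eval_mul, Polynomial.eval_C,
        Polynomial.eval_pow, Polynomial.eval_X, Polynomial.eval_zero]
      field_simp; ring
    rw [e]
    have := V_div (V_pow (V_0mul hβ hy) 6) hU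
    exact_mod_cast this

theorem interp {f : ℚ → ℚ} (hf : Good p f) (hp11 : 11 ≤ p) (l : ℚ) (hl : V p 1 l) :
    V p 6 (f 0 - (100000/6720 * f (l/10) + -1/6 * f (l/2) + 81/14 * f (l/3) + -128/3 * f (l/4) + 625/6 * f (l/5) + -81 * f (l/6))) := by
  obtain ⟨q, hq, h⟩ := hf
  have hu : ∀ n : ℕ, 0 < n → n < 11 → U p (n:ℚ) := fun n h0 h1 => U_nat (fun hd => by
    have := Nat.le_of_dvd h0 hd; omega)
  have hly : ∀ n : ℕ, 0 < n → n < 11 → V p 1 (l/n) := fun n h0 h1 => V_div hl (hu n h0 h1)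
  have c10 : V p 0 (100000/6720:ℚ) := by
    rw [show (100000/6720:ℚ) = (625:ℕ)/((6:ℕ)*(7:ℕ):ℚ) by norm_num]
    exact V_div (V_nat _) (U_mul (hu 6 (by norm_num) (by norm_num)) (hu 7 (by norm_num) (by norm_num)))
  have c2 : V p 0 (-1/6:ℚ) := by
    have := V_div (V_int (p := p) (-1)) (hu 6 (by norm_num) (by norm_num)); exact_mod_cast this
  have c3 : V p 0 (81/14:ℚ) := by
    rw [show (81/14:ℚ) = (81:ℕ)/((2:ℕ)*(7:ℕ):ℚ) by norm_num]
    exact V_div (V_nat _) (U_mul (hu 2 (by norm_num) (by norm_num)) (hu 7 (by norm_num) (by norm_num)))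
  have c4 : V p 0 (-128/3:ℚ) := by
    have := V_div (V_int (p := p) (-128)) (hu 3 (by norm_num) (by norm_num)); exact_mod_cast this
  have c5 : V p 0 (625/6:ℚ) := by
    have := V_div (V_nat (p := p) 625) (hu 6 (by norm_num) (by norm_num)); simpa using this
  have c6 : V p 0 (-81:ℚ) := by exact_mod_cast V_int (p := p) (-81)
  have y10 := hly 10 (by norm_num) (by norm_num)
  have y2 := hly 2 (by norm_num) (by norm_num)
  have y3 := hly 3 (by norm_num) (by norm_num)
  have y4 := hly 4 (by norm_num) (by norm_num)
  have y5 := hly 5 (by norm_num) (by norm_num)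
  have y6 := hly 6 (by norm_num) (by norm_num)
  push_cast at y10 y2 y3 y4 y5 y6
  have main : V p 6 (q.eval 0 - (100000/6720 * q.eval (l/10) + -1/6 * q.eval (l/2) + 81/14 * q.eval (l/3) + -128/3 * q.eval (l/4) + 625/6 * q.eval (l/5) + -81 * q.eval (l/6))) := by
    simp only [Polynomial.eval_eq_sum_range, Finset.mul_sum, ← Finset.sum_add_distrib, ← Finset.sum_sub_distrib]
    apply V_sum
    intro d _
    generalize hqd : q.coeff d = A
    have hA : V p 0 A := hqd ▸ hq d
    by_cases hd : d < 6
    · have : A * 0^d - (100000/6720 * (A*(l/10)^d) + -1/6 * (A*(l/2)^d) + 81/14 * (A*(l/3)^d) + -128/3 * (A*(l/4)^d) + 625/6 * (A*(l/5)^d) + -81 * (A*(l/6)^d)) = 0 := by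
        interval_cases d <;> norm_num <;> ring
      rw [this]; exact V_zero 6
    · have key : ∀ y : ℚ, V p 1 y → V p 6 (y^d) := fun y hy => V_mono (V_pow hy d) (by omega)
      refine V_sub (V_0mul hA (key 0 (V_zero 1))) ?_
      exact V_add (V_add (V_add (V_add (V_add (V_0mul c10 (V_0mul hA (key _ y10))) (V_0mul c2 (V_0mul hA (key _ y2)))) (V_0mul c3 (V_0mul hA (key _ y3)))) (V_0mul c4 (V_0mul hA (key _ y4)))) (V_0mul c5 (V_0mul hA (key _ y5)))) (V_0mul c6 (V_0mul hA (key _ y6)))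
  have e := V_sub (V_add main (h 0 (V_zero 1))) (V_add (V_add (V_add (V_add (V_add (V_0mul c10 (h _ y10)) (V_0mul c2 (h _ y2))) (V_0mul c3 (h _ y3))) (V_0mul c4 (h _ y4))) (V_0mul c5 (h _ y5))) (V_0mul c6 (h _ y6)))
  convert e using 1; ring
end Jsec

def rho (v y : ℚ) (k : ℕ) : ℚ := poch (1/3 - v*y) k / poch (1+(v-10)*y) k
def FF (M : ℕ) (y : ℚ) : ℚ := ∑ k ∈ range (M+1), 3*(1/3-10*y+2*k)*
  (rho 10 y k * rho 2 y k * rho 3 y k * rho 4 y k * rho 5 y k * rho 6 y k)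
def EE (M : ℕ) (z : ℚ) : ℚ := poch (1+z) M / M.factorial
def PP (M : ℕ) (z : ℚ) : ℚ := poch (2/3+z) M / M.factorial

theorem poch_one (k : ℕ) : poch 1 k = k.factorial := by rw [fac_prod]; rfl

section Ksec
variable {p : ℕ} [hp : Fact p.Prime]

theorem U_succ {i : ℕ} (hi : i + 1 < p) : U p (1+(i:ℚ)) := by
  have := U_nat (p := p) (z := i+1) (fun h => by have := Nat.le_of_dvd (by omega) h; omega)
  push_cast at this; rwa [add_comm]
theorem U_succ' {i : ℕ} (hi : i + 1 < p) {t : ℚ} (ht : V p 1 t) : U p (1+t+(i:ℚ)) := by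
  have := U_add (U_succ hi) ht
  rwa [add_right_comm]
theorem U_poch {k : ℕ} (hk : k < p) {t : ℚ} (ht : V p 1 t) : U p (poch (1+t) k) := by
  unfold poch; apply U_prod; intro i hi; have := Finset.mem_range.1 hi; exact U_succ' (by omega) ht
theorem U_fact {k : ℕ} (hk : k < p) : U p (k.factorial:ℚ) := by
  have := U_poch (p := p) hk (V_zero 1); rwa [add_zero, poch_one] at this
theorem U3 (hp11 : 11 ≤ p) : U p (3:ℚ) := by
  have := U_nat (p := p) (z := 3) (fun h => by have := Nat.le_of_dvd (by omega) h; omega)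
  exact_mod_cast this
theorem V_third (hp11 : 11 ≤ p) : V p 0 (1/3:ℚ) := V_div V_one (U3 hp11)

theorem Good_rho (hp11 : 11 ≤ p) (v : ℤ) (k : ℕ) (hk : k < p) : Good p (fun y => rho v y k) := by
  have : (fun y => rho v y k) = fun y => ∏ i ∈ range k, (((1/3+(i:ℚ)) + (-v:ℚ)*y) * ((1+(i:ℚ)) + ((v:ℚ)-10)*y)⁻¹) := by
    funext y; unfold rho poch
    rw [← Finset.prod_div_distrib]
    apply Finset.prod_congr rfl; intro i _
    rw [div_eq_mul_inv]; congr 1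
    · ring
    · congr 1; ring
  rw [this]
  apply Good_prod
  intro i hi
  have := Finset.mem_range.1 hi
  apply Good_mul
  · exact Good_lin (V_add (V_third hp11) (V_nat i)) (V_neg (V_int v))
  · exact Good_inv (U_succ (by omega)) (by exact_mod_cast V_int (p := p) (v-10))

theorem Good_EE (M : ℕ) (hM : M < p) : Good p (fun y => EE M (-10*y)) := by
  have : (fun y => EE M (-10*y)) = fun y => (∏ i ∈ range M, ((1+(i:ℚ)) + (-10:ℚ)*y)) * (M.factorial:ℚ)⁻¹ := by
    funext y; unfold EE poch
    rw [div_eq_mul_inv]; congr 1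
    apply Finset.prod_congr rfl; intro i _; ring
  rw [this]
  apply Good_mul
  · apply Good_prod
    intro i _
    exact Good_lin (V_add V_one (V_nat i)) (by exact_mod_cast V_int (p := p) (-10))
  · exact Good_const (U_V (U_inv (U_fact hM)))

theorem Good_FF (hp11 : 11 ≤ p) (M : ℕ) (hM : M < p) : Good p (FF M) := by
  unfold FF
  apply Good_sum
  intro k hk
  have hk := Finset.mem_range.1 hk
  have r := fun v : ℤ => Good_rho hp11 v k (show k < p by omega)
  apply Good_mul
  · have : (fun y:ℚ => 3*(1/3-10*y+2*(k:ℚ))) = fun y => (1+6*(k:ℚ)) + (-30:ℚ)*y := by funext y; ring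
    rw [this]
    exact Good_lin (by exact_mod_cast V_nat (p := p) (1+6*k)) (by exact_mod_cast V_int (p := p) (-30))
  · have := Good_mul (Good_mul (Good_mul (Good_mul (Good_mul (r 10) (r 2)) (r 3)) (r 4)) (r 5)) (r 6)
    exact_mod_cast this

theorem FF_zero (M : ℕ) : FF M 0 = ∑ k ∈ range (M+1), (6*(k:ℚ)+1)*bP k^6 := by
  unfold FF
  apply Finset.sum_congr rfl
  intro k _
  simp only [rho, mul_zero, sub_zero, add_zero, poch_one]
  unfold bP; ring

theorem EE_zero (M : ℕ) : EE M 0 = 1 := by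
  unfold EE; rw [add_zero, poch_one, div_self]; exact_mod_cast Nat.factorial_ne_zero M

theorem poch_add (x : ℚ) (m n : ℕ) : poch x (m+n) = poch x m * poch (x+m) n := by
  unfold poch; rw [Finset.prod_range_add]; congr 1
  apply Finset.prod_congr rfl; intro i _; push_cast; ring
theorem poch_rev (x : ℚ) (k : ℕ) : poch (1-x-k) k = (-1)^k * poch x k := by
  unfold poch
  have : (-1:ℚ)^k = ∏ _i ∈ range k, (-1:ℚ) := by simp
  rw [this, ← Finset.prod_mul_distrib, ← Finset.prod_range_reflect]
  apply Finset.prod_congr rfl; intro i hi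
  have := Finset.mem_range.1 hi
  have e : ((k-1-i:ℕ):ℚ) = k-1-i := by
    rw [Nat.cast_sub (by omega), Nat.cast_sub (by omega)]; push_cast; ring
  rw [e]; ring

theorem poch_flip (x : ℚ) (M k : ℕ) (hk : k ≤ M) : poch x (M-k) * poch (1-x-M) k = (-1)^k * poch x M := by
  obtain ⟨n, rfl⟩ := Nat.exists_eq_add_of_le hk
  rw [Nat.add_sub_cancel_left, show k+n = n+k by ring, poch_add]
  have := poch_rev (x+n) k
  rw [show 1-x-((n+k:ℕ):ℚ) = 1-(x+n)-k by push_cast; ring, this]; ring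

theorem ratio_flip (b : ℚ) (M k : ℕ) (hk : k ≤ M) (h : ∀ j ≤ M, poch (1-M-b) j ≠ 0) :
    poch b (M-k) / poch (1-M-b) (M-k) = (-1)^M * (poch b k / poch (1-M-b) k) := by
  have h1 := poch_flip b M k hk
  have h2 := poch_flip (1-M-b) M k hk
  have h3 := poch_rev b M
  rw [show 1-(1-(M:ℚ)-b)-M = b by ring] at h2
  rw [show 1-b-(M:ℚ) = 1-M-b by ring] at h1 h3
  rw [h3] at h2
  have n1 := h (M-k) (by omega)
  have n2 := h k hk
  have hs : ((-1:ℚ)^M)*(-1)^M = 1 := by rw [← mul_pow]; norm_num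
  rw [← mul_div_assoc, div_eq_div_iff n1 n2, h1]
  linear_combination (-(-1)^M)*h2 - ((-1)^k * poch b M)*hs

theorem FF_ten (M : ℕ) (hM : M < p) (l : ℚ) (hl : l = M + 1/3) (hV : V p 1 (l/10)) : FF M (l/10) = 0 := by
  have key : ∀ v : ℤ, ∀ k ≤ M, rho v (l/10) (M-k) = (-1)^M * rho v (l/10) k := by
    intro v k hk
    unfold rho
    have e : (1+((v:ℚ)-10)*(l/10)) = 1-M-(1/3-v*(l/10)) := by rw [hl]; ring
    rw [e]
    apply ratio_flip _ _ _ hk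
    intro j hj
    rw [← e]
    exact U_ne (U_poch (p := p) (by omega) (V_0mul (by exact_mod_cast V_int (p := p) (v-10)) hV))
  have h : FF M (l/10) = - FF M (l/10) := by
    conv_lhs => unfold FF
    rw [← Finset.sum_range_reflect]
    unfold FF
    rw [← Finset.sum_neg_distrib]
    apply Finset.sum_congr rfl
    intro k hk
    have hk := Finset.mem_range.1 hk
    have e : M + 1 - 1 - k = M - k := by omega
    rw [e]
    have k10 := key 10 k (by omega)
    have k2 := key 2 k (by omega)
    have k3 := key 3 k (by omega)
    have k4 := key 4 k (by omega)
    have k5 := key 5 k (by omega)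
    have k6 := key 6 k (by omega)
    push_cast at k10 k2 k3 k4 k5 k6
    rw [k10, k2, k3, k4, k5, k6, Nat.cast_sub (by omega)]
    have hs : ((-1:ℚ)^M)^2 = 1 := by rw [← pow_mul, mul_comm, pow_mul]; norm_num
    have hs6 : ((-1:ℚ)^M)^6 = 1 := by rw [show 6 = 2*3 by norm_num, pow_mul, hs]; norm_num
    generalize (-1:ℚ)^M = σ at hs6
    rw [hl]
    generalize rho 10 ((M+1/3)/10) k = A
    generalize rho 2 ((M+1/3)/10) k = B
    generalize rho 3 ((M+1/3)/10) k = C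
    generalize rho 4 ((M+1/3)/10) k = D
    generalize rho 5 ((M+1/3)/10) k = E
    generalize rho 6 ((M+1/3)/10) k = F
    linear_combination (3*(1/3-(M+1/3)+2*((M:ℚ)-k))*A*B*C*D*E*F)*hs6
  linarith
end Ksec

theorem dT_rho (M k : ℕ) (l x v vb vc vd ve : ℚ) (hl : l = M + 1/3) (hv : v*x = l) (hsum : v+vb+vc+vd+ve = 20) :
    (1/3-10*x+2*k)*(rho 10 x k * rho vb x k * rho vc x k * rho vd x k * rho ve x k * rho v x k) =
    dT (1/3-10*x) (1/3-vb*x) (1/3-vc*x) (1/3-vd*x) M k := by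
  have e : ve = 20 - v-vb-vc-vd := by linarith
  have hM : (M:ℚ) = v*x - 1/3 := by rw [hv, hl]; ring
  have h1 : 1+2*(1/3-10*x)-(1/3-vb*x)-(1/3-vc*x)-(1/3-vd*x)+(M:ℚ) = 1/3 - ve*x := by rw [hM, e]; ring
  have h2 : -(M:ℚ) = 1/3 - v*x := by rw [hM]; ring
  have h3 : 1+(1/3-10*x)-(1/3-vb*x) = 1+(vb-10)*x := by ring
  have h4 : 1+(1/3-10*x)-(1/3-vc*x) = 1+(vc-10)*x := by ring
  have h5 : 1+(1/3-10*x)-(1/3-vd*x) = 1+(vd-10)*x := by ring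
  have h6 : (1/3-vb*x)+(1/3-vc*x)+(1/3-vd*x)-(1/3-10*x)-(M:ℚ) = 1+(ve-10)*x := by rw [hM, e]; ring
  have h7 : 1+(1/3-10*x)+(M:ℚ) = 1+(v-10)*x := by rw [hM]; ring
  unfold dT
  rw [h1, h2, h3, h4, h5, h6, h7, ← poch_one]
  unfold rho
  rw [show (1:ℚ)+(10-10)*x = 1 by ring]
  simp only [div_eq_mul_inv, mul_inv]; ring

theorem alg_dv (c A B1 B2 B3 D1 D2 D3 D4 s F : ℚ) (hF : F ≠ 0) (hs : s*s=1) : 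
    c*(s*A*B1*B2*B3/(D1*D2*D3*(s*D4))) =
    c*(B1/F)*(B2/F)*(B3/F)*((A/F)/((D1/F)*(D2/F)*(D3/F)*(D4/F))) := by
  have hs0 : s ≠ 0 := by rintro rfl; simp at hs
  have hFF : F * F⁻¹ = 1 := mul_inv_cancel₀ hF
  have e1 : c*(s*A*B1*B2*B3/(D1*D2*D3*(s*D4))) = (s*s⁻¹) * (c*A*B1*B2*B3*D1⁻¹*D2⁻¹*D3⁻¹*D4⁻¹) := by
    simp only [div_eq_mul_inv, mul_inv]; ring
  have e2 : c*(B1/F)*(B2/F)*(B3/F)*((A/F)/((D1/F)*(D2/F)*(D3/F)*(D4/F))) = (F*F⁻¹)^4 * (c*A*B1*B2*B3*D1⁻¹*D2⁻¹*D3⁻¹*D4⁻¹) := by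
    simp only [div_eq_mul_inv, mul_inv, inv_inv]; ring
  rw [e1, e2, hFF, mul_inv_cancel₀ hs0]; ring

theorem Dval (p : ℕ) [hp : Fact p.Prime] (hp3 : p % 3 = 2) (hp11 : 11 ≤ p) (M : ℕ) (hM : 3*M+1 = 2*p)
    (l x : ℚ) (v vb vc vd ve : ℤ) (hl : l = M + 1/3) (hv : v*x = l) (hx : V p 1 x) (hsum : v+vb+vc+vd+ve = 20)
    (hA : ∀ i < 2*M, (4/3 - 10*x + (i:ℚ)) ≠ 0) :
    ∑ k ∈ range (M+1), 3*(1/3-10*x+2*k)*(rho 10 x k * rho vb x k * rho vc x k * rho vd x k * rho ve x k * rho v x k)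
     = 3*(l-10*x)*PP M ((vb+vc-10)*x)*PP M ((vb+vd-10)*x)*PP M ((vc+vd-10)*x)*
       (EE M (10*x-l)/(EE M ((vb-10)*x)*EE M ((vc-10)*x)*EE M ((vd-10)*x)*EE M ((ve-10)*x))) := by
  have hsum' : (v:ℚ)+vb+vc+vd+ve = 20 := by exact_mod_cast hsum
  simp only [mul_assoc (3:ℚ)]
  rw [← Finset.mul_sum, Finset.sum_congr rfl (fun k _ => dT_rho M k l x v vb vc vd ve hl hv hsum')]
  have hu : ∀ w : ℤ, ∀ i < M, 1+(1/3-10*x)-(1/3-w*x)+(i:ℚ) ≠ 0 := by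
    intro w i hi
    have := U_ne (U_succ' (p := p) (i := i) (by omega) (V_0mul (V_int (p := p) (w-10)) hx))
    intro h; apply this; push_cast; linarith
  rw [dougall _ _ _ _ _ (hu vb) (hu vc) (hu vd) ?_ ?_]
  · have e : (ve:ℚ) = 20 - v-vb-vc-vd := by linarith
    have hMq : (M:ℚ) = v*x - 1/3 := by rw [hv, hl]; ring
    have r1 := poch_rev (1+(10*x-l)) M
    have r2 := poch_rev (1+((ve:ℚ)-10)*x) M
    rw [show 1-(1+(10*x-l))-(M:ℚ) = 1/3-10*x by rw [hl]; ring] at r1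
    have t1 : (1/3-10*x) * poch (1+(1/3-10*x)) M = (l-10*x) * ((-1)^M * poch (1+(10*x-l)) M) := by
      rw [← r1, show 1+(1/3-10*x) = (1/3-10*x)+1 by ring, ← poch_succ', poch_succ, hl]; ring
    have t2 : poch (1+(1/3-10*x)-(1/3-vb*x)-(1/3-vc*x)-(1/3-vd*x)) M = (-1)^M * poch (1+((ve:ℚ)-10)*x) M := by
      rw [← r2]; congr 1; rw [hMq, e]; ring
    rw [t2]
    rw [show 1+(1/3-10*x)-(1/3-(vb:ℚ)*x)-(1/3-vc*x) = 2/3 + (vb+vc-10)*x by ring,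
      show 1+(1/3-10*x)-(1/3-(vb:ℚ)*x)-(1/3-vd*x) = 2/3 + (vb+vd-10)*x by ring,
      show 1+(1/3-10*x)-(1/3-(vc:ℚ)*x)-(1/3-vd*x) = 2/3 + (vc+vd-10)*x by ring,
      show 1+(1/3-10*x)-(1/3-(vb:ℚ)*x) = 1+(vb-10)*x by ring,
      show 1+(1/3-10*x)-(1/3-(vc:ℚ)*x) = 1+(vc-10)*x by ring,
      show 1+(1/3-10*x)-(1/3-(vd:ℚ)*x) = 1+(vd-10)*x by ring]
    unfold PP EE
    have hs : ((-1:ℚ)^M)*(-1)^M = 1 := by rw [← mul_pow]; norm_num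
    have hF : (M.factorial:ℚ) ≠ 0 := by exact_mod_cast Nat.factorial_ne_zero M
    have := alg_dv (3*(l-10*x)) (poch (1+(10*x-l)) M) (poch (2/3 + (vb+vc-10)*x) M) (poch (2/3 + (vb+vd-10)*x) M) (poch (2/3 + (vc+vd-10)*x) M)
      (poch (1+(vb-10)*x) M) (poch (1+(vc-10)*x) M) (poch (1+(vd-10)*x) M) (poch (1+((ve:ℚ)-10)*x) M) ((-1)^M) M.factorial hF hs
    simp only [mul_assoc] at this ⊢
    rw [← this]
    rw [← mul_div_assoc (1/3-10*x), ← mul_assoc (1/3-10*x), t1]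
    ring
  · intro i hi
    have : U p ((2:ℤ)-3*i:ℚ) := by
      have hnd : ¬ (p:ℤ) ∣ (2-3*(i:ℤ)) := by
        rintro ⟨t, ht⟩
        have hp0 : (11:ℤ) ≤ p := by exact_mod_cast hp11
        have h1 : t < 1 := by
          by_contra h; push Not at h
          have := mul_le_mul_of_nonneg_left h (show (0:ℤ) ≤ p by omega); omega
        have h2 : -2 < t := by
          by_contra h; push Not at h
          have := mul_le_mul_of_nonneg_left h (show (0:ℤ) ≤ p by omega); omega
        have : t = 0 ∨ t = -1 := by omega
        rcases this with rfl | rfl <;> omega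
      exact_mod_cast U_int hnd
    have h2 := U_add (U_div this (U3 hp11)) (V_0mul (V_int (p := p) (10-vb-vc-vd)) hx)
    have := U_ne h2
    intro h; apply this; rw [← h]; push_cast; ring
  · intro i hi
    have := hA i hi
    intro h; apply this; rw [← h]; ring

section Nsec
variable {p : ℕ} [hp : Fact p.Prime]

theorem cong1 {A B α β : ℚ} (hA : V p 2 (A-(1+α))) (hB : V p 2 (B-(1+β))) (ha : V p 1 α) (hb : V p 1 β) :
    V p 2 (A*B-(1+(α+β))) := by
  have hA0 : V p 0 A := by
    have := V_add (V_mono hA (by norm_num : (0:ℤ) ≤ 2)) (V_add V_one (V_mono ha (by norm_num)))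
    simpa using this
  have hb0 : V p 0 (1+β) := V_add V_one (V_mono hb (by norm_num))
  have h1 := V_congmul hA0 hb0 hA hB
  have h2 := V_mul ha hb
  have := V_add h1 h2
  convert this using 1; ring

theorem prod_lin (φ : ℕ → ℚ) (n : ℕ) (hφ : ∀ i < n, V p 0 (φ i)) (z : ℚ) (hz : V p 1 z) :
    V p 2 (∏ i ∈ range n, (1+z*φ i) - (1+z*∑ i ∈ range n, φ i)) := by
  induction n with
  | zero => simpa using V_zero 2
  | succ n ih =>
    rw [Finset.prod_range_succ, Finset.sum_range_succ, mul_add z]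
    apply cong1 (ih fun i hi => hφ i (by omega)) _ _ _
    · simpa using V_zero 2
    · exact V_mul0 hz (V_sum fun i hi => hφ i (by have := Finset.mem_range.1 hi; omega))
    · exact V_mul0 hz (hφ n (by omega))

theorem EE_lin (M : ℕ) (hM : M < p) : ∃ H : ℚ, V p 0 H ∧ ∀ z, V p 1 z → V p 2 (EE M z - (1+z*H)) := by
  have hφ : ∀ i < M, V p 0 ((1+(i:ℚ))⁻¹) := fun i hi => U_V (U_inv (U_succ (by omega)))
  refine ⟨∑ i ∈ range M, (1+(i:ℚ))⁻¹, V_sum fun i hi => hφ i (Finset.mem_range.1 hi), fun z hz => ?_⟩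
  have := prod_lin _ M hφ z hz
  convert this using 2
  unfold EE poch
  rw [fac_prod, ← Finset.prod_div_distrib]
  apply Finset.prod_congr rfl; intro i _
  have : (1+(i:ℚ)) ≠ 0 := by positivity
  field_simp; ring

theorem EE_U (M : ℕ) (hM : M < p) (z : ℚ) (hz : V p 1 z) : U p (EE M z) := U_div (U_poch hM hz) (U_fact hM)

theorem Bcong (M : ℕ) (hM : M < p) (l x : ℚ) (v vb vc vd ve : ℤ) (hv : v*x = l) (hx : V p 1 x) (hsum : v+vb+vc+vd+ve = 20) :
    V p 2 (EE M (10*x-l)/(EE M ((vb-10)*x)*EE M ((vc-10)*x)*EE M ((vd-10)*x)*EE M ((ve-10)*x)) * EE M (-10*x)^3 - 1) := by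
  obtain ⟨H, hH, hE⟩ := EE_lin (p := p) M hM
  have hsum' : (v:ℚ)+vb+vc+vd+ve = 20 := by exact_mod_cast hsum
  have hw : ∀ w : ℤ, V p 1 (((w:ℚ)-10)*x) := fun w => V_0mul (by exact_mod_cast V_int (p := p) (w-10)) hx
  have h10 : V p 1 (-10*x) := V_0mul (by exact_mod_cast V_int (p := p) (-10)) hx
  have h10l : V p 1 (10*x-l) := by
    rw [← hv, ← sub_mul]; exact V_0mul (by exact_mod_cast V_int (p := p) (10-v)) hx
  have m := fun {z : ℚ} (hz : V p 1 z) => V_mul0 hz hH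
  have ad := fun {z w : ℚ} (hz : V p 1 z) (hw : V p 1 w) => V_add hz hw
  have d1 := cong1 (hE _ (hw vb)) (hE _ (hw vc)) (m (hw vb)) (m (hw vc))
  have d2 := cong1 d1 (hE _ (hw vd)) (ad (m (hw vb)) (m (hw vc))) (m (hw vd))
  have d3 := cong1 d2 (hE _ (hw ve)) (ad (ad (m (hw vb)) (m (hw vc))) (m (hw vd))) (m (hw ve))
  have n1 := cong1 (hE _ h10l) (hE _ h10) (m h10l) (m h10)
  have n2 := cong1 n1 (hE _ h10) (ad (m h10l) (m h10)) (m h10)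
  have n3 := cong1 n2 (hE _ h10) (ad (ad (m h10l) (m h10)) (m h10)) (m h10)
  have hU : U p (EE M ((vb-10)*x)*EE M ((vc-10)*x)*EE M ((vd-10)*x)*EE M ((ve-10)*x)) :=
    U_mul (U_mul (U_mul (EE_U M hM _ (hw vb)) (EE_U M hM _ (hw vc))) (EE_U M hM _ (hw vd))) (EE_U M hM _ (hw ve))
  generalize EE M ((vb-10)*x)*EE M ((vc-10)*x)*EE M ((vd-10)*x)*EE M ((ve-10)*x) = D at *
  have hD := U_ne hU
  have := V_div (V_sub n3 d3) hU
  convert this using 1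
  generalize EE M (10*x-l) = X
  generalize EE M (-10*x) = Y
  have e : (1 + ((10 * x - l) * H + -10 * x * H + -10 * x * H + -10 * x * H)) = (1 + ((↑vb - 10) * x * H + (↑vc - 10) * x * H + (↑vd - 10) * x * H + (↑ve - 10) * x * H)) := by
    have : (ve:ℚ) = 20 - v-vb-vc-vd := by linarith
    rw [this, ← hv]; ring
  rw [e]
  field_simp; ring

theorem PP_zero (hp3 : p % 3 = 2) (hp11 : 11 ≤ p) (M : ℕ) (hM : 3*M+1 = 2*p) (l : ℚ) (hl : l = M + 1/3) (z : ℚ) (hz : z = -l/2) : PP M z = 0 := by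
  unfold PP
  have : poch (2/3+z) M = 0 := by
    unfold poch
    obtain ⟨i, hi⟩ : ∃ i, 3*i+2 = p := ⟨(p-2)/3, by omega⟩
    apply Finset.prod_eq_zero (i := i) (Finset.mem_range.2 (by omega))
    have h1 : (M:ℚ) = 2*i+1 := by
      have : M = 2*i+1 := by omega
      exact_mod_cast this
    rw [hz, hl, h1]; ring
  rw [this, zero_div]

theorem PP_lin (hp3 : p % 3 = 2) (hp11 : 11 ≤ p) (M : ℕ) (hM : 3*M+1 = 2*p) (l : ℚ) (hl : l = M + 1/3) (z : ℚ) (hz : V p 1 z) :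
    ∃ S, V p 2 (S - 1) ∧ PP M z = PP M 0 * (1+2*z/l) * S := by
  obtain ⟨j, hj⟩ : ∃ i, 3*i+2 = p := ⟨(p-2)/3, by omega⟩
  have hMj : M = 2*j+1 := by omega
  have hMq : (M:ℚ) = 2*j+1 := by exact_mod_cast hMj
  have hlp : l = 2*(p:ℚ)/3 := by
    rw [hl, ← hj, hMj]; push_cast; ring
  have hVl : V p 1 l := by
    rw [hlp]; exact V_div (V_0mul (by exact_mod_cast V_nat (p := p) 2) V_p) (U3 hp11)
  have hU : ∀ i < M, i ≠ j → U p (2/3+(i:ℚ)) := by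
    intro i hi hij
    have : U p ((3*i+2:ℕ):ℚ) := U_nat (by
      rintro ⟨t, ht⟩
      have ht2 : t < 2 := by
        by_contra h; push Not at h
        have := Nat.mul_le_mul_left p h; omega
      interval_cases t <;> omega)
    have := U_div this (U3 hp11)
    convert this using 1; push_cast; ring
  set φ : ℕ → ℚ := fun i => if i = j then 0 else (2/3+(i:ℚ))⁻¹ with hφd
  have hφ : ∀ i < M, V p 0 (φ i) := by
    intro i hi
    simp only [hφd]; split_ifs with h
    · exact V_zero 0
    · exact U_V (U_inv (hU i hi h))
  have hsum : V p 1 (∑ i ∈ range M, φ i) := by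
    have h2 : V p 1 (∑ i ∈ range M, (φ i + φ (M-1-i))) := by
      apply V_sum
      intro i hi
      have hi := Finset.mem_range.1 hi
      by_cases h : i = j
      · have h' : M-1-i = j := by omega
        rw [h', h]; simpa [hφd] using V_zero (p := p) 1
      · have h' : M-1-i ≠ j := by omega
        simp only [hφd, h', h, if_false]
        have u1 := hU i hi h
        have u2 := hU (M-1-i) (by omega) h'
        have e : (2/3+(i:ℚ))⁻¹ + (2/3+((M-1-i:ℕ):ℚ))⁻¹ = l / ((2/3+(i:ℚ))*(2/3+((M-1-i:ℕ):ℚ))) := by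
          have c : ((M-1-i:ℕ):ℚ) = l - 4/3 - i := by
            rw [Nat.cast_sub (by omega), Nat.cast_sub (by omega), hl]; push_cast; ring
          have n1 := U_ne u1
          have n2 := U_ne u2
          rw [inv_add_inv n1 n2, c]; congr 1; ring
        rw [e]
        exact V_div hVl (U_mul u1 u2)
    rw [Finset.sum_add_distrib, Finset.sum_range_reflect] at h2
    have u2 : U p ((2:ℕ):ℚ) := U_nat (fun h => by have := Nat.le_of_dvd (by norm_num) h; omega)
    have := V_div h2 u2
    convert this using 1; push_cast; ring
  refine ⟨∏ i ∈ range M, (1+z*φ i), ?_, ?_⟩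
  · have h1 := prod_lin φ M hφ z hz
    have h2 := V_mul hz hsum
    have := V_add h1 h2
    convert this using 1; ring
  · have hl0 : l ≠ 0 := by rw [hl]; positivity
    have e : (1+2*z/l) = ∏ i ∈ range M, (if i = j then 1+2*z/l else 1) := by
      rw [Finset.prod_ite_eq' (range M) j (fun _ => 1+2*z/l), if_pos (Finset.mem_range.2 (by omega))]
    unfold PP
    rw [e]
    have : poch (2/3+z) M = poch (2/3+0) M * (∏ i ∈ range M, (if i = j then 1+2*z/l else 1)) * ∏ i ∈ range M, (1+z*φ i) := by
      unfold poch
      rw [← Finset.prod_mul_distrib, ← Finset.prod_mul_distrib]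
      apply Finset.prod_congr rfl
      intro i _
      by_cases h : i = j
      · subst h
        simp only [hφd, if_true]
        have : (2/3+0+(i:ℚ)) = l/2 := by rw [hl, hMq]; ring
        rw [this]
        have : (2/3+z+(i:ℚ)) = l/2+z := by rw [hl, hMq]; ring
        rw [this]
        field_simp; ring
      · simp only [hφd, h, if_false]
        have : (2/3+(i:ℚ)) ≠ 0 := by positivity
        rw [add_zero]; field_simp; ring
    rw [this]; ring
end Nsec


section Osec
variable {p : ℕ} [hp : Fact p.Prime]

theorem FF_perm (M : ℕ) (x : ℚ) (vb vc vd ve v : ℤ)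
    (h : ∀ k, rho 10 x k * rho vb x k * rho vc x k * rho vd x k * rho ve x k * rho v x k =
      rho 10 x k * rho 2 x k * rho 3 x k * rho 4 x k * rho 5 x k * rho 6 x k) :
    FF M x = ∑ k ∈ range (M+1), 3*(1/3-10*x+2*k)*(rho 10 x k * rho vb x k * rho vc x k * rho vd x k * rho ve x k * rho v x k) := by
  unfold FF
  apply Finset.sum_congr rfl; intro k _; rw [h k]

theorem Gval (hp3 : p % 3 = 2) (hp11 : 11 ≤ p) (M : ℕ) (hM : 3*M+1 = 2*p)
    (l x : ℚ) (v vb vc vd ve : ℤ) (hl : l = M + 1/3) (hv : v*x = l) (hx : V p 1 x) (hsum : v+vb+vc+vd+ve = 20)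
    (hv0 : U p (v:ℚ))
    (hA : ∀ i < 2*M, (4/3 - 10*x + (i:ℚ)) ≠ 0)
    (h : ∀ k, rho 10 x k * rho vb x k * rho vc x k * rho vd x k * rho ve x k * rho v x k =
      rho 10 x k * rho 2 x k * rho 3 x k * rho 4 x k * rho 5 x k * rho 6 x k) :
    V p 6 (FF M x * EE M (-10*x)^3 - 3*(l-10*x)*(PP M 0)^3*
      ((1+2*((vb+vc-10:ℤ):ℚ)/v)*(1+2*((vb+vd-10:ℤ):ℚ)/v)*(1+2*((vc+vd-10:ℤ):ℚ)/v))) := by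
  rw [FF_perm M x vb vc vd ve v h, Dval p hp3 hp11 M hM l x v vb vc vd ve hl hv hx hsum hA]
  have hB := Bcong (p := p) M (by omega) l x v vb vc vd ve hv hx hsum
  have hw : ∀ w : ℤ, V p 1 ((w:ℚ)*x) := fun w => V_0mul (V_int w) hx
  have hl0 : l ≠ 0 := by rw [hl]; positivity
  have hvne := U_ne hv0
  have q : ∀ w : ℤ, 2*((w:ℚ)*x)/l = 2*(w:ℚ)/v := by
    intro w
    have hx0 : x ≠ 0 := by rintro rfl; apply hl0; rw [← hv]; ring
    rw [← hv]; field_simp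
  obtain ⟨S1, hS1, e1⟩ := PP_lin hp3 hp11 M hM l hl _ (hw (vb+vc-10))
  obtain ⟨S2, hS2, e2⟩ := PP_lin hp3 hp11 M hM l hl _ (hw (vb+vd-10))
  obtain ⟨S3, hS3, e3⟩ := PP_lin hp3 hp11 M hM l hl _ (hw (vc+vd-10))
  rw [q] at e1 e2 e3
  have i : ∀ w : ℤ, V p 0 (1+2*(w:ℚ)/v) := fun w =>
    V_add V_one (V_div (by exact_mod_cast V_int (p := p) (2*w)) hv0)
  have i1 := i (vb+vc-10)
  have i2 := i (vb+vd-10)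
  have i3 := i (vc+vd-10)
  have hVl : V p 1 (l-10*x) := by
    rw [← hv, ← sub_mul]; exact V_0mul (by exact_mod_cast V_int (p := p) (v-10)) hx
  have hR : V p 1 (PP M 0) := by
    have := X1 p hp3 M (by rw [hM]; exact dvd_mul_left p 2)
    unfold PP; rwa [add_zero]
  have int1 : ∀ {S : ℚ}, V p 2 (S - 1) → V p 0 S := fun {S} hS => by
    have := V_add (V_mono hS (by norm_num : (0:ℤ) ≤ 2)) V_one; simpa using this
  push_cast at e1 e2 e3 i1 i2 i3 ⊢
  rw [e1, e2, e3]
  generalize EE M (10*x-l)/(EE M ((vb-10)*x)*EE M ((vc-10)*x)*EE M ((vd-10)*x)*EE M ((ve-10)*x)) = D at *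
  generalize EE M (-10*x)^3 = E at *
  have c1 := V_congmul (int1 hS1) V_one hS1 hS2
  have c2 := V_congmul (int1 (by simpa using c1)) V_one c1 hS3
  have c3 := V_congmul (int1 (by simpa using c2)) V_one c2 hB
  generalize (1+2*((vb:ℚ)+vc-10)/v) = A1 at *
  generalize (1+2*((vb:ℚ)+vd-10)/v) = A2 at *
  generalize (1+2*((vc:ℚ)+vd-10)/v) = A3 at *
  have fin := V_mul0 (V_mul0 (V_mul0 (V_mul0 (V_mul (V_mul hVl (V_pow hR 3)) c3) i1) i2) i3) (V_nat (p := p) 3)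
  convert fin using 1
  push_cast; ring

theorem FF_van (hp3 : p % 3 = 2) (hp11 : 11 ≤ p) (M : ℕ) (hM : 3*M+1 = 2*p)
    (l x : ℚ) (v vb vc vd ve : ℤ) (hl : l = M + 1/3) (hv : v*x = l) (hx : V p 1 x) (hsum : v+vb+vc+vd+ve = 20)
    (hA : ∀ i < 2*M, (4/3 - 10*x + (i:ℚ)) ≠ 0)
    (h : ∀ k, rho 10 x k * rho vb x k * rho vc x k * rho vd x k * rho ve x k * rho v x k =
      rho 10 x k * rho 2 x k * rho 3 x k * rho 4 x k * rho 5 x k * rho 6 x k) 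
    (h2 : 2*(vb+vc-10) = -v) : FF M x = 0 := by
  rw [FF_perm M x vb vc vd ve v h, Dval p hp3 hp11 M hM l x v vb vc vd ve hl hv hx hsum hA]
  have h2' : 2*((vb:ℚ)+vc-10) = -v := by exact_mod_cast h2
  rw [PP_zero hp3 hp11 M hM l hl (((vb:ℚ)+vc-10)*x) (by rw [← hv]; linear_combination (x/2)*h2')]
  ring

theorem case1M (hp3 : p % 3 = 2) (hp11 : 11 ≤ p) (M : ℕ) (hM : 3*M+1 = 2*p) :
    V p 6 (∑ k ∈ range (M+1), (6*(k:ℚ)+1)*bP k^6 - 10*p*(poch (2/3) M/M.factorial)^3) := by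
  obtain ⟨l, hl⟩ : ∃ l : ℚ, l = M + 1/3 := ⟨_, rfl⟩
  have hlp : l = 2*(p:ℚ)/3 := by
    have : (3*(M:ℚ)+1) = 2*p := by exact_mod_cast hM
    rw [hl]; linarith
  have hVl : V p 1 l := by
    rw [hlp]; exact V_div (V_0mul (by exact_mod_cast V_nat (p := p) 2) V_p) (U3 hp11)
  have hu : ∀ n : ℕ, 0 < n → n < 11 → U p (n:ℚ) := fun n h0 h1 => U_nat (fun hd => by
    have := Nat.le_of_dvd h0 hd; omega)
  have hly : ∀ n : ℕ, 0 < n → n < 11 → V p 1 (l/n) := fun n h0 h1 => V_div hVl (hu n h0 h1)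
  have y10 := hly 10 (by norm_num) (by norm_num)
  have y2 := hly 2 (by norm_num) (by norm_num)
  have y3 := hly 3 (by norm_num) (by norm_num)
  have y4 := hly 4 (by norm_num) (by norm_num)
  have y5 := hly 5 (by norm_num) (by norm_num)
  have y6 := hly 6 (by norm_num) (by norm_num)
  have u3 := hu 3 (by norm_num) (by norm_num)
  have u5 := hu 5 (by norm_num) (by norm_num)
  push_cast at y10 y2 y3 y4 y5 y6 u3 u5
  have hA : ∀ v : ℕ, (v = 2 ∨ v = 3 ∨ v = 4 ∨ v = 5 ∨ v = 6) → ∀ i < 2*M, (4/3 - 10*(l/v) + (i:ℚ)) ≠ 0 := by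
    intro v hv i hi h
    have hv0 : (v:ℚ) ≠ 0 := by have : v ≠ 0 := by omega
                               exact_mod_cast this
    rw [hlp] at h
    field_simp at h
    have h' : ((4+3*i)*v:ℚ) = 20*p := by linarith
    have h'' : (4+3*i)*v = 20*p := by exact_mod_cast h'
    rcases hv with rfl | rfl | rfl | rfl | rfl <;> omega
  have a2 := hA 2 (by norm_num)
  have a3 := hA 3 (by norm_num)
  have a4 := hA 4 (by norm_num)
  have a5 := hA 5 (by norm_num)
  have a6 := hA 6 (by norm_num)
  push_cast at a2 a3 a4 a5 a6
  have z10 : FF M (l/10) = 0 := FF_ten (p := p) M (by omega) l hl y10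
  have z2 : FF M (l/2) = 0 := FF_van (p := p) hp3 hp11 M hM l (l/2) 2 3 6 4 5 hl (by push_cast; ring) y2 (by norm_num) a2 (by intro k; push_cast; ring) (by norm_num)
  have z4 : FF M (l/4) = 0 := FF_van (p := p) hp3 hp11 M hM l (l/4) 4 2 6 3 5 hl (by push_cast; ring) y4 (by norm_num) a4 (by intro k; push_cast; ring) (by norm_num)
  have z6 : FF M (l/6) = 0 := FF_van (p := p) hp3 hp11 M hM l (l/6) 6 2 5 3 4 hl (by push_cast; ring) y6 (by norm_num) a6 (by intro k; push_cast; ring) (by norm_num)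
  have g3 := Gval (p := p) hp3 hp11 M hM l (l/3) 3 4 5 6 2 hl (by push_cast; ring) y3 (by norm_num) (by exact_mod_cast u3) a3 (by intro k; push_cast; ring)
  have g5 := Gval (p := p) hp3 hp11 M hM l (l/5) 5 3 4 6 2 hl (by push_cast; ring) y5 (by norm_num) (by exact_mod_cast u5) a5 (by intro k; push_cast; ring)
  have hI := interp (Good_mul (Good_FF hp11 M (by omega)) (Good_pow (Good_EE M (by omega)) 3)) hp11 l hVl
  rw [z10, z2, z4, z6, mul_zero, EE_zero, FF_zero] at hI
  have c3 : V p 0 (81/14:ℚ) := by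
    rw [show (81/14:ℚ) = (81:ℕ)/((2:ℕ)*(7:ℕ):ℚ) by norm_num]
    exact V_div (V_nat _) (U_mul (hu 2 (by norm_num) (by norm_num)) (hu 7 (by norm_num) (by norm_num)))
  have c5 : V p 0 (625/6:ℚ) := by
    have := V_div (V_nat (p := p) 625) (hu 6 (by norm_num) (by norm_num)); simpa using this
  have tot := V_add (V_add hI (V_0mul c3 g3)) (V_0mul c5 g5)
  convert tot using 1
  have hp' : (p:ℚ) = 3*l/2 := by rw [hlp]; ring
  have hR : poch (2/3) M/M.factorial = PP M 0 := by unfold PP; rw [add_zero]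
  rw [hp', hR]
  push_cast; ring

theorem case1P (hp3 : p % 3 = 2) (hp11 : 11 ≤ p) (M : ℕ) (hM : 3*M+1 = 2*p) :
    V p 6 (∑ k ∈ range p, (6*(k:ℚ)+1)*bP k^6 - 10*p*(poch (2/3) M/M.factorial)^3) := by
  have h1 := case1M (p := p) hp3 hp11 M hM
  have h2 : ∑ k ∈ range p, (6*(k:ℚ)+1)*bP k^6 = ∑ k ∈ range (M+1), (6*(k:ℚ)+1)*bP k^6 + ∑ k ∈ Ico (M+1) p, (6*(k:ℚ)+1)*bP k^6 := by
    rw [Finset.sum_range_add_sum_Ico _ (by omega)]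
  have h3 : V p 6 (∑ k ∈ Ico (M+1) p, (6*(k:ℚ)+1)*bP k^6) := by
    apply V_sum
    intro k hk
    have hk := Finset.mem_Ico.1 hk
    have := V_pow (V13' p hp3 k (by omega) hk.2) 6
    exact V_0mul (by exact_mod_cast V_nat (p := p) (6*k+1)) (by exact_mod_cast this)
  rw [h2]
  have := V_add h1 h3
  convert this using 1; ring
end Osec

theorem case5 [hp : Fact (Nat.Prime 5)] (N : ℕ) (hN : N = 4 ∨ N = 5) :
    V 5 6 (∑ k ∈ range N, (6*(k:ℚ)+1)*bP k^6 - 10*5*(poch (2/3) 3/(Nat.factorial 3:ℕ))^3) := by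
  have key : ∃ z d : ℤ, ¬ (5:ℤ) ∣ d ∧ ∑ k ∈ range N, (6*(k:ℚ)+1)*bP k^6 - 10*5*(poch (2/3) 3/(Nat.factorial 3:ℕ))^3 = (5:ℚ)^6 * z / d := by
    rcases hN with rfl | rfl
    · refine ⟨-90552608, 282429536481, by norm_num, ?_⟩
      norm_num [Finset.sum_range_succ, Finset.prod_range_succ, bP, poch, Nat.factorial]
    · refine ⟨-66009910007, 205891132094649, by norm_num, ?_⟩
      norm_num [Finset.sum_range_succ, Finset.prod_range_succ, bP, poch, Nat.factorial]
  obtain ⟨z, d, hd, e⟩ := key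
  rw [e]
  have := V_ppow (p := 5) 6
  exact V_div (V_mul0 (by exact_mod_cast this) (V_int z)) (U_int (by exact_mod_cast hd))

theorem stmt5 (p : ℕ) (hp : p.Prime) (hodd : Odd p) (s : ℕ) (hs : 0 < s)
    (hmod : p ^ s % 3 = 2)
    (m : ℕ) (hm : m = (2 * p ^ s - 1) / 3 ∨ m = p ^ s - 1) :
    pcong p (s + 5)
      (∑ k ∈ Finset.range (m + 1),
        (6 * k + 1) * poch (1 / 3) k ^ 6 / (k.factorial : ℚ) ^ 6)
      (10 * (p : ℚ) ^ s *
        (poch (2 / 3) ((2 * p ^ s - 1) / 3) ^ 3 / poch 1 ((2 * p ^ s - 1) / 3) ^ 3)) := by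
  have : Fact p.Prime := ⟨hp⟩
  have hpar : p % 3 = 2 ∧ s % 2 = 1 := by
    have h0 : p % 3 = 0 ∨ p % 3 = 1 ∨ p % 3 = 2 := by omega
    rw [Nat.pow_mod] at hmod
    rcases h0 with h | h | h <;> rw [h] at hmod
    · rw [zero_pow (by omega)] at hmod; simp at hmod
    · simp at hmod
    · refine ⟨h, ?_⟩
      by_contra h'
      obtain ⟨t, rfl⟩ : ∃ t, s = 2*t := ⟨s/2, by omega⟩
      rw [pow_mul, Nat.pow_mod] at hmod; simp at hmod
  obtain ⟨hp3, hsodd⟩ := hpar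
  have hp5 : 5 ≤ p := by
    have := hp.two_le
    obtain ⟨t, ht⟩ := hodd
    omega
  have hpos : 0 < p^s := pow_pos hp.pos s
  obtain ⟨M, hMd⟩ : ∃ M, M = (2*p^s-1)/3 := ⟨_, rfl⟩
  have hM : 3*M+1 = 2*p^s := by omega
  rw [← hMd] at hm ⊢
  have hN : m+1 = M+1 ∨ m+1 = p^s := by omega
  apply V_pcong
  have e1 : ∑ k ∈ Finset.range (m + 1), (6 * (k:ℚ) + 1) * poch (1 / 3) k ^ 6 / (k.factorial : ℚ) ^ 6
     = ∑ k ∈ range (m+1), (6*(k:ℚ)+1)*bP k^6 := by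
    apply Finset.sum_congr rfl; intro k _; unfold bP; rw [div_pow, mul_div_assoc]
  rw [e1, poch_one, ← div_pow]
  by_cases hs3 : 3 ≤ s
  · have := case3 p hp5 hp3 s hs3 hmod M hM (m+1) hN
    exact_mod_cast this
  · have hs1 : s = 1 := by omega
    subst hs1
    rw [pow_one] at hM hN ⊢
    by_cases hp11 : 11 ≤ p
    · rcases hN with h | h <;> rw [h]
      · exact case1M hp3 hp11 M hM
      · exact case1P hp3 hp11 M hM
    · have : p = 5 := by
        obtain ⟨t, ht⟩ := hodd
        omega
      subst this
      have hM3 : M = 3 := by omega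
      subst hM3
      exact case5 (m+1) (by omega)
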